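/- arXiv:1609.07539 — 4 statements merged into one kernel-verified Lean document; each statement's English description precedes it below -/
import Mathlib

section
/- Let F : ℝⁿ → ℝⁿ be continuously differentiable and let φ : ℝ → ℝⁿ → ℝⁿ be a global flow for F, i.e. φ 0 x = x, φ (s + t) x = φ s (φ t x) for all s, t ∈ ℝ and x ∈ ℝⁿ, and for every x the map t ↦ φ t x is differentiable with derivative F (φ t x). Let A ⊆ ℝⁿ be a compact set invariant under the flow, i.e. φ t '' A = A for every t ∈ ℝ. Suppose there exists a function ρ : ℝⁿ → ℝ that is continuously differentiable on the complement Aᶜ and satisfies: (CLD1) ρ x > 0 for Lebesgue-a.e. x ∈ Aᶜ; (CLD2) for every ε > 0, ∫_{x : dist(x, A) ≥ ε} ρ x dx < ∞; (CLD3) the divergence ∇·(F ρ)(x) > 0 for Lebesgue-a.e. x ∈ Aᶜ. Then A is almost globally stable: for Lebesgue-a.e. x ∈ ℝⁿ, dist(φ t x, A) → 0 as t → ∞. -/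
/-!
Write `U = Aᶜ` and let `μ` be the measure with density `ρ` on `U`. The condition `∇·(F ρ) > 0` says
that the flow increases `μ`: formally, Liouville's formula gives
`μ (φ (-t) ⁻¹' B) - μ B = ∫ s in 0..t, ∫ x in φ (-s) ⁻¹' B, ∇·(F ρ) x`.

The field is only `C¹`, so the flow is shown to be locally Lipschitz (Picard–Lindelöf, uniqueness of
solutions, and propagation along the time axis) and Liouville's formula is replaced by a weak form
that needs no derivative of the flow. For a compactly supported Lipschitz function `g` on `U` one
has `d/dt ∫ g (φ (-t) x) ρ x = ∫ g (φ (-t) x) ∇·(F ρ) x`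
(`IsGlobalFlow.hasDerivAt_integral`); this is differentiation under the integral together with
an integration by parts for Lipschitz functions (`integral_fderiv_apply_eq_neg`), where
Rademacher's theorem supplies the almost everywhere derivative. Integrating in time and
approximating compact sets by Lipschitz functions gives the inequality of measures
`μ + κ t ≤ (φ (-t))_* μ`, where `κ t` is the pushforward of `ds ⊗ ∇·(F ρ) dx` on `[0, t] × U`
under `(s, x) ↦ φ (-s) x` (`IsGlobalFlow.add_gainMeasure_le`).

Recurrence is then impossible away from `A`. Let `P = {x | ε ≤ dist (x, A)}`, so `μ P < ∞`, and let
`S` be the set of points of `P` whose integer-time orbit returns to `P` infinitely often. Split `S`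
according to the first return time to `P`. The first return map is injective and sends `S` into `S`,
and on each piece it increases `μ` by at least `κ 1`, so `μ S + κ 1 S ≤ μ S`; since `μ S` is finite,
`κ 1 S = 0` (`IsGlobalFlow.measure_recurrent_eq_zero`). The density `∇·(F ρ)` is positive, so this
forces `S` to be Lebesgue null. Almost every integer-time orbit is thus eventually within every
distance `ε` of `A`, and compactness of `[0, 1] × A` passes from integer to real times.
-/

open MeasureTheory Metric Filter

/-- The divergence of the vector field `fun y => ρ y • F y` at `x`:
the trace of its Fréchet derivative. -/
noncomputable def divMul {n : ℕ}
    (F : EuclideanSpace ℝ (Fin n) → EuclideanSpace ℝ (Fin n))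
    (ρ : EuclideanSpace ℝ (Fin n) → ℝ) (x : EuclideanSpace ℝ (Fin n)) : ℝ :=
  LinearMap.trace ℝ (EuclideanSpace ℝ (Fin n))
    (fderiv ℝ (fun y => ρ y • F y) x).toLinearMap

open Set Topology
open scoped NNReal ENNReal Manifold

/-! ### Regularity of the flow of a continuously differentiable field -/

/-- `φ` is a global flow of the vector field `F`: an action of `(ℝ, +)` whose orbits are integral
curves of `F`. No regularity in the space variable is assumed. -/
structure IsGlobalFlow {E : Type*} [NormedAddCommGroup E] [NormedSpace ℝ E]
    (F : E → E) (φ : ℝ → E → E) : Prop where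
  zero : ∀ x, φ 0 x = x
  add : ∀ s t x, φ (s + t) x = φ s (φ t x)
  deriv : ∀ t x, HasDerivAt (fun τ => φ τ x) (F (φ t x)) t

section Flow

variable {E : Type*} [NormedAddCommGroup E] [NormedSpace ℝ E]
  {F : E → E} {φ : ℝ → E → E}

namespace IsGlobalFlow

lemma continuous_time (h : IsGlobalFlow F φ) (x : E) : Continuous fun t => φ t x :=
  continuous_iff_continuousAt.2 fun t => (h.deriv t x).continuousAt

lemma neg_apply (h : IsGlobalFlow F φ) (t : ℝ) (x : E) : φ (-t) (φ t x) = x := by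
  rw [← h.add, neg_add_cancel, h.zero]

lemma apply_neg (h : IsGlobalFlow F φ) (t : ℝ) (x : E) : φ t (φ (-t) x) = x := by
  rw [← h.add, add_neg_cancel, h.zero]

end IsGlobalFlow

variable [FiniteDimensional ℝ E]

/-- Two solutions of `y' = F y` on a symmetric interval agree if they agree at time zero. The interval
is written `[0 - ε, 0 + ε]` to match the form in which Picard–Lindelöf produces solutions. -/
lemma eqOn_of_hasDerivAt (hF : ContDiff ℝ 1 F) {f g : ℝ → E} {ε : ℝ} (hε : 0 < ε)
    (hf : ∀ t ∈ Icc (0 - ε) (0 + ε), HasDerivWithinAt f (F (f t)) (Icc (0 - ε) (0 + ε)) t)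
    (hg : ∀ t ∈ Icc (0 - ε) (0 + ε), HasDerivWithinAt g (F (g t)) (Icc (0 - ε) (0 + ε)) t)
    (h0 : f 0 = g 0) : EqOn f g (Icc (0 - ε) (0 + ε)) := by
  have : ProperSpace E := FiniteDimensional.proper_real E
  have hfc : ContinuousOn f (Icc (0 - ε) (0 + ε)) := fun t ht => (hf t ht).continuousWithinAt
  have hgc : ContinuousOn g (Icc (0 - ε) (0 + ε)) := fun t ht => (hg t ht).continuousWithinAt
  obtain ⟨R, hR⟩ := ((isCompact_Icc.image_of_continuousOn hfc).union
    (isCompact_Icc.image_of_continuousOn hgc)).isBounded.subset_closedBall (0 : E)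
  obtain ⟨K, hK⟩ := LocallyLipschitzOn.exists_lipschitzOnWith_of_compact
    (isCompact_closedBall (0 : E) R) (hF.locallyLipschitz.locallyLipschitzOn)
  refine ODE_solution_unique_of_mem_Icc (v := fun _ => F) (s := fun _ => closedBall 0 R)
    (K := K) (t₀ := 0) (fun _ _ => hK) ⟨by linarith, by linarith⟩ hfc ?_ ?_ hgc ?_ ?_ h0
  · exact fun t ht => (hf t (Ioo_subset_Icc_self ht)).hasDerivAt (Icc_mem_nhds ht.1 ht.2)
  · exact fun t ht => hR (Or.inl ⟨t, Ioo_subset_Icc_self ht, rfl⟩)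
  · exact fun t ht => (hg t (Ioo_subset_Icc_self ht)).hasDerivAt (Icc_mem_nhds ht.1 ht.2)
  · exact fun t ht => hR (Or.inr ⟨t, Ioo_subset_Icc_self ht, rfl⟩)

namespace IsGlobalFlow

/-- Near any point, the flow is Lipschitz in space uniformly for small times, because it coincides
with the local flow produced by Picard–Lindelöf. -/
lemma exists_lipschitzOnWith_small (h : IsGlobalFlow F φ) (hF : ContDiff ℝ 1 F) (p : E) :
    ∃ r > (0 : ℝ), ∃ ε > (0 : ℝ), ∃ L : ℝ≥0, ∀ s, |s| ≤ ε →
      LipschitzOnWith L (φ s) (closedBall p r) := by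
  obtain ⟨ε, hε, a, r, M, K, hr, hpl⟩ := IsPicardLindelof.of_contDiffAt_one (hF.contDiffAt (x := p))
  obtain ⟨α, hα, L, hL⟩ :=
    (hpl 0).exists_forall_mem_closedBall_eq_hasDerivWithinAt_lipschitzOnWith
  refine ⟨r, hr, ε, hε, L, fun s hs => ?_⟩
  have hs' : s ∈ Icc (0 - ε) (0 + ε) := by
    rw [abs_le] at hs; constructor <;> linarith
  have heq : ∀ x ∈ closedBall p r, φ s x = α x s := fun x hx =>
    eqOn_of_hasDerivAt (f := fun t => φ t x) hF hε (fun t _ => (h.deriv t x).hasDerivWithinAt)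
      (fun t ht => (hα x hx).2 t ht) (by rw [h.zero]; exact (hα x hx).1.symm) hs'
  intro x hx y hy
  rw [heq x hx, heq y hy]
  exact hL s hs' hx hy

/-- Every time-`t` map is locally Lipschitz. -/
lemma locallyLipschitz (h : IsGlobalFlow F φ) (hF : ContDiff ℝ 1 F) (t : ℝ) :
    LocallyLipschitz (φ t) := by
  intro x
  -- the set of times at which the flow is Lipschitz near `x` is open and closed in `ℝ`
  let S : Set ℝ := {t | ∃ K, ∃ U ∈ 𝓝 x, LipschitzOnWith K (φ t) U}
  have key : IsLocallyConstant fun t => t ∈ S := by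
    rw [IsLocallyConstant.iff_eventually_eq]
    intro τ
    obtain ⟨r, hr, ε, hε, L, hL⟩ := h.exists_lipschitzOnWith_small hF (φ τ x)
    have step : ∀ t t', |t' - t| ≤ ε → φ t x ∈ ball (φ τ x) r → t ∈ S → t' ∈ S := by
      rintro t t' htt' ht ⟨K, U, hU, hK⟩
      have hc : ContinuousAt (φ t) x := hK.continuousOn.continuousAt hU
      refine ⟨L * K, U ∩ φ t ⁻¹' (ball (φ τ x) r),
        inter_mem hU (hc.preimage_mem_nhds (isOpen_ball.mem_nhds ht)), ?_⟩
      have : φ t' = φ (t' - t) ∘ φ t := by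
        ext1 y; rw [Function.comp, ← h.add, sub_add_cancel]
      rw [this]
      exact (hL _ htt').comp (hK.mono inter_subset_left) fun y hy => ball_subset_closedBall hy.2
    have h1 : ∀ᶠ t in 𝓝 τ, φ t x ∈ ball (φ τ x) r :=
      (h.continuous_time x).continuousAt (isOpen_ball.mem_nhds (mem_ball_self hr))
    have h2 : ∀ᶠ t in 𝓝 τ, |t - τ| ≤ ε := by
      filter_upwards [closedBall_mem_nhds τ hε] with t ht
      simpa [Real.dist_eq] using ht
    filter_upwards [h1, h2] with t ht1 ht2
    refine propext ⟨step t τ (by rwa [abs_sub_comm]) ht1, step τ t ht2 (mem_ball_self hr)⟩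
  have h0 : (0 : ℝ) ∈ S := ⟨1, univ, univ_mem, by
    have : φ 0 = id := funext h.zero
    rw [this]; exact LipschitzWith.id.lipschitzOnWith⟩
  have := key.apply_eq_of_isPreconnected isPreconnected_univ (mem_univ t) (mem_univ 0)
  exact this.mpr h0

lemma continuous_space (h : IsGlobalFlow F φ) (hF : ContDiff ℝ 1 F) (t : ℝ) :
    Continuous (φ t) := (h.locallyLipschitz hF t).continuous

/-- Joint continuity of the flow in time and space. -/
lemma continuous (h : IsGlobalFlow F φ) (hF : ContDiff ℝ 1 F) :
    Continuous fun q : ℝ × E => φ q.1 q.2 := by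
  -- continuity at time zero, from the uniform Lipschitz bound for small times
  have key : ∀ p : E, ContinuousAt (fun q : ℝ × E => φ q.1 q.2) (0, p) := by
    intro p
    obtain ⟨r, hr, ε, hε, L, hL⟩ := h.exists_lipschitzOnWith_small hF p
    have : ContinuousOn (Function.uncurry fun s x => φ s x) (Icc (-ε) ε ×ˢ closedBall p r) := by
      refine continuousOn_prod_of_continuousOn_lipschitzOnWith' _ L
        (fun s hs => hL s (abs_le.2 hs)) fun x _ => (h.continuous_time x).continuousOn
    exact this.continuousAt (prod_mem_nhds (Icc_mem_nhds (by linarith) hε)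
      (closedBall_mem_nhds p hr))
  rw [continuous_iff_continuousAt]
  rintro ⟨t, x⟩
  have h2 : (fun q : ℝ × E => φ q.1 q.2) =
      (fun q : ℝ × E => φ q.1 q.2) ∘ fun q : ℝ × E => (q.1 - t, φ t q.2) := by
    ext q
    simp [← h.add]
  rw [h2]
  refine ContinuousAt.comp (by simpa using key (φ t x)) ?_
  exact ((continuous_fst.sub continuous_const).prodMk
    ((h.continuous_space hF t).comp continuous_snd)).continuousAt

end IsGlobalFlow

lemma LocallyLipschitz.exists_lipschitzWith_of_hasCompactSupport {u : E → ℝ}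
    (hu : LocallyLipschitz u) (hc : HasCompactSupport u) : ∃ C, LipschitzWith C u := by
  have : ProperSpace E := FiniteDimensional.proper_real E
  have hK : IsCompact (cthickening 1 (tsupport u)) := hc.isCompact.cthickening
  obtain ⟨C, hC⟩ := LocallyLipschitzOn.exists_lipschitzOnWith_of_compact hK
    hu.locallyLipschitzOn
  obtain ⟨M, hM⟩ := hu.continuous.bounded_above_of_compact_support hc
  have hM0 : 0 ≤ M := (norm_nonneg _).trans (hM 0)
  -- if `y` is at distance at least `1` from the support, then `u y = 0` and the bound `M` suffices
  have key : ∀ x y, x ∈ tsupport u → dist (u x) (u y) ≤ (C + M) * dist x y := by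
    intro x y hx
    by_cases hy : y ∈ cthickening 1 (tsupport u)
    · have := hC.dist_le_mul x (self_subset_cthickening _ hx) y hy
      nlinarith [dist_nonneg (x := x) (y := y)]
    · have h1 : 1 ≤ dist x y := by
        by_contra! hlt
        exact hy (mem_cthickening_of_dist_le y x 1 _ hx (by rw [dist_comm]; exact hlt.le))
      have h2 : u y = 0 := image_eq_zero_of_notMem_tsupport fun h =>
        hy (self_subset_cthickening _ h)
      rw [h2, dist_zero_right]
      nlinarith [hM x, C.2, mul_nonneg C.2 (dist_nonneg (x := x) (y := y))]
  refine ⟨C + ⟨M, hM0⟩, LipschitzWith.of_dist_le_mul fun x y => ?_⟩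
  by_cases hx : x ∈ tsupport u
  · exact key x y hx
  by_cases hy : y ∈ tsupport u
  · rw [dist_comm, dist_comm x]; exact key y x hy
  rw [image_eq_zero_of_notMem_tsupport hx, image_eq_zero_of_notMem_tsupport hy, dist_self]
  positivity

end Flow

/-! ### Integration by parts for Lipschitz functions -/

/-- Integration by parts (the divergence theorem) for a compactly supported Lipschitz function `u` and
a vector field `V` that is `C¹` on a neighbourhood `U` of the support of `u`. Here `fderiv ℝ u` is
the almost everywhere derivative given by Rademacher's theorem. -/
lemma integral_fderiv_apply_eq_neg {n : ℕ} {u : EuclideanSpace ℝ (Fin n) → ℝ}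
    {V : EuclideanSpace ℝ (Fin n) → EuclideanSpace ℝ (Fin n)} {U : Set (EuclideanSpace ℝ (Fin n))}
    {C : ℝ≥0} (hu : LipschitzWith C u) (hc : HasCompactSupport u) (hU : IsOpen U)
    (huU : tsupport u ⊆ U) (hV : ContDiffOn ℝ 1 V U) :
    ∫ x, fderiv ℝ u x (V x) =
      -∫ x, u x * LinearMap.trace ℝ (EuclideanSpace ℝ (Fin n)) (fderiv ℝ V x).toLinearMap := by
  set b := EuclideanSpace.basisFun (Fin n) ℝ
  -- a cutoff `χ`, equal to `1` near the support of `u` and supported in `U`, makes `V` global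
  obtain ⟨K, hK, huK, hKU⟩ := exists_compact_between hc.isCompact hU huU
  obtain ⟨χ, hχ1, hχ0, -⟩ := exists_contMDiffMap_one_nhds_of_subset_interior
    𝓘(ℝ, EuclideanSpace ℝ (Fin n)) (n := 1) hc.isCompact.isClosed huK
  have hχs : tsupport χ ⊆ K := closure_minimal
    (fun x hx => by by_contra h; exact hx (hχ0 x h)) hK.isClosed
  have hχc : HasCompactSupport χ := hK.of_isClosed_subset (isClosed_tsupport _) hχs
  have hχd : ContDiff ℝ 1 χ := χ.contMDiff.contDiff
  let W : EuclideanSpace ℝ (Fin n) → EuclideanSpace ℝ (Fin n) := fun x => χ x • V x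
  have hWd : ContDiff ℝ 1 W := by
    rw [contDiff_iff_contDiffAt]
    intro x
    by_cases hx : x ∈ U
    · exact hχd.contDiffAt.smul (hV.contDiffAt (hU.mem_nhds hx))
    · have h0 : W =ᶠ[𝓝 x] fun _ => 0 := by
        filter_upwards [(isClosed_tsupport χ).isOpen_compl.mem_nhds
          (fun h => hx (hKU (hχs h)))] with y hy
        simp [W, image_eq_zero_of_notMem_tsupport hy]
      exact contDiffAt_const.congr_of_eventuallyEq h0
  have hWc : HasCompactSupport W := hχc.smul_right
  have hWV : ∀ x ∈ tsupport u, W =ᶠ[𝓝 x] V := by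
    intro x hx
    filter_upwards [Filter.Eventually.filter_mono (nhds_le_nhdsSet hx) hχ1] with y hy
    simp [W, hy]
  -- the coordinates of the truncated field are Lipschitz with compact support
  have hWi : ∀ i, ContDiff ℝ 1 fun x => W x i := fun i => by
    exact (contDiff_piLp_apply 2 (i := i)).comp hWd
  have hWic : ∀ i, HasCompactSupport fun x => W x i := fun i =>
    hWc.comp_left (g := fun y : EuclideanSpace ℝ (Fin n) => y i) rfl
  have hlip : ∀ i, ∃ D, LipschitzWith D fun x => W x i := fun i =>
    ContDiff.lipschitzWith_of_hasCompactSupport (hWic i) (hWi i) one_ne_zero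
  choose D hD using hlip
  have hdiff := hu.ae_differentiableAt (μ := volume)
  have hintg : ∀ i, Integrable (fun x => lineDeriv ℝ u x (b i) * W x i) := fun i => by
    have h1 := ((hWi i).continuous.integrable_of_hasCompactSupport (hWic i) (μ := volume))
    exact h1.bdd_mul (c := C * ‖b i‖) (aestronglyMeasurable_lineDeriv hu.continuous _)
      (Eventually.of_forall fun x => norm_lineDeriv_le_of_lipschitz ℝ hu)
  have hWfd : ∀ i x v, lineDeriv ℝ (fun x => W x i) x v = (fderiv ℝ W x v) i := by
    intro i x v
    have h1 : HasFDerivAt (fun x => W x i) ((EuclideanSpace.proj i).comp (fderiv ℝ W x)) x :=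
      ((EuclideanSpace.proj i : EuclideanSpace ℝ (Fin n) →L[ℝ] ℝ).hasFDerivAt).comp x
        (hWd.differentiable one_ne_zero x).hasFDerivAt
    rw [(h1.hasLineDerivAt v).lineDeriv]; rfl
  have hint2 : ∀ i, Integrable (fun x => lineDeriv ℝ (fun x => W x i) x (-b i) * u x) := fun i => by
    simp_rw [hWfd]
    refine Continuous.integrable_of_hasCompactSupport ?_ (hc.mul_left)
    have := hWd.continuous_fderiv one_ne_zero
    have h2 : Continuous fun x => (fderiv ℝ W x (-b i)) i := by fun_prop
    exact h2.mul hu.continuous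
  calc ∫ x, fderiv ℝ u x (V x) = ∫ x, ∑ i, lineDeriv ℝ u x (b i) * W x i := by
        refine integral_congr_ae ?_
        filter_upwards [hdiff] with x hx
        by_cases hxu : x ∈ tsupport u
        · simp_rw [hx.lineDeriv_eq_fderiv]
          rw [(hWV x hxu).eq_of_nhds]
          conv_lhs => rw [← b.sum_repr (V x)]
          simp [b, mul_comm]
        · have h0 : fderiv ℝ u x = 0 := by
            have := notMem_tsupport_iff_eventuallyEq.1 hxu
            rw [this.fderiv_eq]; simp
          simp_rw [hx.lineDeriv_eq_fderiv, h0]; simp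
    _ = ∑ i, ∫ x, lineDeriv ℝ u x (b i) * W x i := integral_finsetSum _ fun i _ => hintg i
    _ = ∑ i, ∫ x, lineDeriv ℝ (fun x => W x i) x (-b i) * u x :=
        Finset.sum_congr rfl fun i _ => LipschitzWith.integral_lineDeriv_mul_eq hu (hD i) (hWic i) (b i)
    _ = ∫ x, ∑ i, lineDeriv ℝ (fun x => W x i) x (-b i) * u x :=
        (integral_finsetSum _ fun i _ => hint2 i).symm
    _ = ∫ x, -(u x * LinearMap.trace ℝ _ (fderiv ℝ V x).toLinearMap) := by
        congr 1
        ext x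
        by_cases hxu : x ∈ tsupport u
        · rw [← (hWV x hxu).fderiv_eq, LinearMap.trace_eq_sum_inner _ b, Finset.mul_sum,
            ← Finset.sum_neg_distrib]
          refine Finset.sum_congr rfl fun i _ => ?_
          rw [hWfd]
          simp [b, EuclideanSpace.inner_single_left, mul_comm]
        · simp [image_eq_zero_of_notMem_tsupport hxu]
    _ = _ := integral_neg _

/-! ### Transport of test functions by the flow -/

section Transport

variable {n : ℕ} {F : EuclideanSpace ℝ (Fin n) → EuclideanSpace ℝ (Fin n)}
  {φ : ℝ → EuclideanSpace ℝ (Fin n) → EuclideanSpace ℝ (Fin n)}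
  {U : Set (EuclideanSpace ℝ (Fin n))} {ρ : EuclideanSpace ℝ (Fin n) → ℝ}

lemma continuousOn_divMul (hF : ContDiff ℝ 1 F) (hU : IsOpen U) (hρ : ContDiffOn ℝ 1 ρ U) :
    ContinuousOn (divMul F ρ) U := by
  have hV : ContDiffOn ℝ 1 (fun y => ρ y • F y) U := hρ.smul hF.contDiffOn
  have h1 := hV.continuousOn_fderiv_of_isOpen hU le_rfl
  have h2 : Continuous fun T : EuclideanSpace ℝ (Fin n) →L[ℝ] EuclideanSpace ℝ (Fin n) =>
      LinearMap.trace ℝ (EuclideanSpace ℝ (Fin n)) T.toLinearMap :=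
    ((LinearMap.trace ℝ (EuclideanSpace ℝ (Fin n))).comp
      (ContinuousLinearMap.coeLM ℝ)).continuous_of_finiteDimensional
  exact h2.comp_continuousOn h1

/-- The product of a continuous function supported in the open set `U` and a function that is only
continuous on `U` is continuous everywhere: it vanishes near every point outside `U`. -/
lemma continuous_mul_of_tsupport_subset {w q : EuclideanSpace ℝ (Fin n) → ℝ} (hU : IsOpen U)
    (hw : Continuous w) (hwU : tsupport w ⊆ U) (hq : ContinuousOn q U) :
    Continuous fun x => w x * q x := by
  rw [continuous_iff_continuousAt]
  intro x
  by_cases hx : x ∈ U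
  · exact hw.continuousAt.mul (hq.continuousAt (hU.mem_nhds hx))
  · have h0 : (fun x => w x * q x) =ᶠ[𝓝 x] fun _ => 0 := by
      filter_upwards [(isClosed_tsupport w).isOpen_compl.mem_nhds fun h => hx (hwU h)] with y hy
      simp [image_eq_zero_of_notMem_tsupport hy]
    exact continuousAt_const.congr h0.symm

lemma integrable_mul_of_tsupport_subset {w q : EuclideanSpace ℝ (Fin n) → ℝ} (hU : IsOpen U)
    (hw : Continuous w) (hwc : HasCompactSupport w) (hwU : tsupport w ⊆ U)
    (hq : ContinuousOn q U) : Integrable fun x => w x * q x :=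
  (continuous_mul_of_tsupport_subset hU hw hwU hq).integrable_of_hasCompactSupport hwc.mul_right

lemma IsGlobalFlow.tsupport_comp_subset (h : IsGlobalFlow F φ) (hF : ContDiff ℝ 1 F)
    {g : EuclideanSpace ℝ (Fin n) → ℝ} (hc : HasCompactSupport g) (t : ℝ) :
    tsupport (fun x => g (φ (-t) x)) ⊆ φ t '' tsupport g := by
  refine closure_minimal (fun x hx => ?_)
    (hc.isCompact.image (h.continuous_space hF t)).isClosed
  exact ⟨φ (-t) x, subset_tsupport g hx, h.apply_neg t x⟩

lemma IsGlobalFlow.hasCompactSupport_comp (h : IsGlobalFlow F φ) (hF : ContDiff ℝ 1 F)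
    {g : EuclideanSpace ℝ (Fin n) → ℝ} (hc : HasCompactSupport g) (t : ℝ) :
    HasCompactSupport fun x => g (φ (-t) x) :=
  (hc.isCompact.image (h.continuous_space hF t)).of_isClosed_subset (isClosed_tsupport _)
    (h.tsupport_comp_subset hF hc t)

/-- The weak transport identity at time zero, by differentiation under the integral sign followed by
integration by parts for the field `ρ F`. -/
lemma IsGlobalFlow.hasDerivAt_integral_zero (h : IsGlobalFlow F φ) (hF : ContDiff ℝ 1 F)
    (hU : IsOpen U) (hUφ : ∀ t x, x ∈ U → φ t x ∈ U) (hρ : ContDiffOn ℝ 1 ρ U)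
    {u : EuclideanSpace ℝ (Fin n) → ℝ} {C : ℝ≥0}
    (hu : LipschitzWith C u) (hc : HasCompactSupport u) (huU : tsupport u ⊆ U) :
    HasDerivAt (fun s => ∫ x, u (φ (-s) x) * ρ x) (∫ x, u x * divMul F ρ x) 0 := by
  -- `K` contains the supports of `u ∘ φ (-s)` for all `|s| ≤ 1`, and `M` bounds the speed on it
  set K := (fun q : ℝ × EuclideanSpace ℝ (Fin n) => φ q.1 q.2) '' (Icc (-1) 1 ×ˢ tsupport u)
    with hK_def
  have hK : IsCompact K := (isCompact_Icc.prod hc.isCompact).image (h.continuous hF)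
  have hKU : K ⊆ U := by
    rintro _ ⟨q, hq, rfl⟩
    exact hUφ _ _ (huU hq.2)
  obtain ⟨M, hM⟩ := ((isCompact_Icc (a := (-1 : ℝ)) (b := 1)).prod hK).exists_bound_of_continuousOn
    (f := fun q : ℝ × EuclideanSpace ℝ (Fin n) => F (φ q.1 q.2))
    (hF.continuous.comp (h.continuous hF)).continuousOn
  have hderiv : ∀ x, HasDerivAt (fun s => φ (-s) x) (-F x) 0 := by
    intro x
    have h1 : HasDerivAt (fun τ => φ τ x) (F (φ (-0) x)) (-0) := h.deriv (-0) x
    have := h1.scomp (0 : ℝ) (hasDerivAt_neg (0 : ℝ))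
    simpa [h.zero, Function.comp_def] using this
  have key := hasDerivAt_integral_of_dominated_loc_of_lip (𝕜 := ℝ) (μ := volume) (x₀ := (0 : ℝ))
    (s := Icc (-1) 1)
    (F := fun s x => u (φ (-s) x) * ρ x)
    (F' := fun x => fderiv ℝ u x (-F x) * ρ x)
    (bound := K.indicator fun x => C * M * ‖ρ x‖)
    (Icc_mem_nhds (by norm_num) (by norm_num)) ?_ ?_ ?_ ?_ ?_ ?_
  · have h2 := integral_fderiv_apply_eq_neg hu hc hU huU (V := fun y => ρ y • F y)
      (hρ.smul hF.contDiffOn)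
    have h3 : ∫ x, u x * divMul F ρ x = ∫ x, fderiv ℝ u x (-F x) * ρ x := by
      have h4 : ∀ x, fderiv ℝ u x (-F x) * ρ x = -fderiv ℝ u x (ρ x • F x) := by
        intro x; simp [mul_comm]
      simp_rw [h4]
      rw [integral_neg, h2, neg_neg]; rfl
    rw [h3]
    exact key.2
  · refine Eventually.of_forall fun s => ?_
    refine (continuous_mul_of_tsupport_subset hU
      (hu.continuous.comp (h.continuous_space hF (-s))) ?_ hρ.continuousOn).aestronglyMeasurable
    refine (h.tsupport_comp_subset hF hc s).trans ?_
    rintro _ ⟨y, hy, rfl⟩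
    exact hUφ _ _ (huU hy)
  · simp only [neg_zero, h.zero]
    exact integrable_mul_of_tsupport_subset hU hu.continuous hc huU hρ.continuousOn
  · have h5 : AEStronglyMeasurable (fun x => fderiv ℝ u x (-F x)) volume := by
      have := measurable_fderiv ℝ u
      exact isBoundedBilinearMap_apply.continuous.comp_aestronglyMeasurable
        (this.aestronglyMeasurable.prodMk hF.continuous.neg.aestronglyMeasurable)
    have h6 : (fun x => fderiv ℝ u x (-F x) * ρ x) =
        fun x => fderiv ℝ u x (-F x) * (tsupport u).indicator ρ x := by
      ext x
      by_cases hx : x ∈ tsupport u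
      · rw [indicator_of_mem hx]
      · have : fderiv ℝ u x = 0 := by
          rw [(notMem_tsupport_iff_eventuallyEq.1 hx).fderiv_eq]; simp
        simp [this]
    rw [h6]
    refine h5.mul ?_
    rw [aestronglyMeasurable_indicator_iff (isClosed_tsupport u).measurableSet]
    exact (hρ.continuousOn.mono huU).aestronglyMeasurable (isClosed_tsupport u).measurableSet
  · refine Eventually.of_forall fun x => ?_
    by_cases hx : x ∈ K
    · have hM0 : 0 ≤ M := (norm_nonneg _).trans (hM (0, x) ⟨by constructor <;> norm_num, hx⟩)
      rw [indicator_of_mem hx]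
      have hl : LipschitzOnWith M.toNNReal (fun s => φ (-s) x) (Icc (-1) 1) := by
        refine (convex_Icc (-1 : ℝ) 1).lipschitzOnWith_of_nnnorm_hasDerivWithin_le
          (f' := fun s => -F (φ (-s) x)) (fun s _ => ?_) (fun s hs => ?_)
        · have := (h.deriv (-s) x).scomp s (hasDerivAt_neg s)
          simpa [Function.comp_def] using this.hasDerivWithinAt
        · rw [← NNReal.coe_le_coe, coe_nnnorm, norm_neg, Real.coe_toNNReal _ hM0]
          exact hM (-s, x) ⟨⟨by linarith [hs.2], by linarith [hs.1]⟩, hx⟩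
      refine LipschitzOnWith.of_dist_le_mul fun s hs s' hs' => ?_
      have h7 := hu.dist_le_mul (φ (-s) x) (φ (-s') x)
      have h8 := hl.dist_le_mul s hs s' hs'
      rw [Real.coe_toNNReal _ hM0] at h8
      have h9 : |↑C * M * ‖ρ x‖| = C * M * ‖ρ x‖ := abs_of_nonneg (by positivity)
      rw [Real.coe_nnabs, h9, Real.dist_eq, ← sub_mul, abs_mul, ← Real.dist_eq,
        Real.norm_eq_abs]
      calc dist (u (φ (-s) x)) (u (φ (-s') x)) * |ρ x|
          ≤ (C * (M * dist s s')) * |ρ x| := by gcongr; exact h7.trans (by gcongr)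
        _ = _ := by ring
    · have h0 : ∀ s ∈ Icc (-1 : ℝ) 1, u (φ (-s) x) = 0 := by
        intro s hs
        by_contra hne
        exact hx ⟨(s, φ (-s) x), ⟨hs, subset_tsupport u hne⟩, h.apply_neg s x⟩
      intro s hs s' hs'
      simp [h0 s hs, h0 s' hs']
  · rw [integrable_indicator_iff hK.measurableSet]
    exact (ContinuousOn.integrableOn_compact hK
      (continuousOn_const.mul (hρ.continuousOn.mono hKU).norm))
  · filter_upwards [hu.ae_differentiableAt (μ := volume)] with x hx
    have h1 : HasFDerivAt u (fderiv ℝ u x) (φ (-0) x) := by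
      simpa [h.zero] using hx.hasFDerivAt
    exact (h1.comp_hasDerivAt (0 : ℝ) (hderiv x)).mul_const _

/-- The weak transport identity at time `t`: the group law reduces it to time zero for the
function `g ∘ φ (-t)`, which is again Lipschitz with compact support in `U`. -/
lemma IsGlobalFlow.hasDerivAt_integral (h : IsGlobalFlow F φ) (hF : ContDiff ℝ 1 F)
    (hU : IsOpen U) (hUφ : ∀ t x, x ∈ U → φ t x ∈ U) (hρ : ContDiffOn ℝ 1 ρ U)
    {g : EuclideanSpace ℝ (Fin n) → ℝ}
    (hg : LocallyLipschitz g) (hc : HasCompactSupport g) (hgU : tsupport g ⊆ U) (t : ℝ) :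
    HasDerivAt (fun s => ∫ x, g (φ (-s) x) * ρ x) (∫ x, g (φ (-t) x) * divMul F ρ x) t := by
  have hc' := h.hasCompactSupport_comp hF hc t
  obtain ⟨C, hC⟩ := (hg.comp (h.locallyLipschitz hF (-t))).exists_lipschitzWith_of_hasCompactSupport
    hc'
  have h1 := h.hasDerivAt_integral_zero hF hU hUφ hρ hC hc' <|
    (h.tsupport_comp_subset hF hc t).trans <| by
      rintro _ ⟨y, hy, rfl⟩
      exact hUφ _ _ (hgU hy)
  have h2 : HasDerivAt (fun s => s - t) 1 t := (hasDerivAt_id t).sub_const t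
  have h1' := h1
  rw [← sub_self t] at h1'
  have h3 := HasDerivAt.comp (h := fun s => s - t) t h1' h2
  simp only [Function.comp_def, ← h.add, mul_one] at h3
  refine h3.congr_of_eventuallyEq (Eventually.of_forall fun s => ?_)
  refine integral_congr_ae (ae_of_all _ fun x => ?_)
  change g (φ (-s) x) * ρ x = g (φ (-t + -(s - t)) x) * ρ x
  congr 3
  ring

end Transport

/-! ### Growth of the weighted measure -/

/-- An inequality between measures may be tested on nonnegative Lipschitz functions with compact
support in an open set `U`, if `ν` is finite on the compact subsets of `U` and `η` is carried
by `U`. -/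
lemma measure_le_of_lintegral_le {X : Type*} [MetricSpace X] [ProperSpace X] [MeasurableSpace X]
    [BorelSpace X] {η ν : Measure X} {U : Set X} (hU : IsOpen U) (hηU : η Uᶜ = 0)
    (hν : ∀ K, IsCompact K → K ⊆ U → ν K ≠ ∞)
    (hle : ∀ (g : X → ℝ) (C : ℝ≥0), LipschitzWith C g → HasCompactSupport g → tsupport g ⊆ U →
      (∀ x, 0 ≤ g x) → ∫⁻ x, ENNReal.ofReal (g x) ∂η ≤ ∫⁻ x, ENNReal.ofReal (g x) ∂ν) :
    η ≤ ν := by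
  -- on a compact set `K`, thickened indicators of `K` decrease to its indicator function
  have hcomp : ∀ K, IsCompact K → K ⊆ U → η K ≤ ν K := by
    intro K hK hKU
    obtain ⟨δ₀, hδ₀, hsub⟩ := hK.exists_cthickening_subset_open hU hKU
    have hlim := (tendsto_measure_cthickening_of_isClosed (μ := ν)
      ⟨δ₀, hδ₀, hν _ hK.cthickening hsub⟩ hK.isClosed).mono_left
      (nhdsWithin_le_nhds (s := Ioi 0))
    refine ge_of_tendsto hlim ?_
    filter_upwards [Ioo_mem_nhdsGT hδ₀] with δ hδ
    set g : X → ℝ := fun x => (thickenedIndicator hδ.1 K x : ℝ) with hg_def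
    have hgs : tsupport g ⊆ cthickening δ K := closure_minimal (fun x hx => by
      by_contra hn
      refine hx ?_
      change ((thickenedIndicator hδ.1 K x : ℝ≥0) : ℝ) = 0
      rw [thickenedIndicator_zero hδ.1 K fun h => hn (thickening_subset_cthickening δ K h)]
      rfl) isClosed_cthickening
    have hgl : LipschitzWith δ.toNNReal⁻¹ g := LipschitzWith.of_dist_le_mul fun x y =>
      (lipschitzWith_thickenedIndicator hδ.1 K).dist_le_mul x y
    calc η K = ∫⁻ x, K.indicator 1 x ∂η := (lintegral_indicator_one hK.measurableSet).symm
      _ ≤ ∫⁻ x, ENNReal.ofReal (g x) ∂η := by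
          refine lintegral_mono fun x => ?_
          by_cases hx : x ∈ K
          · rw [indicator_of_mem hx]
            change 1 ≤ ENNReal.ofReal ((thickenedIndicator hδ.1 K x : ℝ≥0) : ℝ)
            rw [thickenedIndicator_one hδ.1 K hx]
            simp
          · simp [hx]
      _ ≤ ∫⁻ x, ENNReal.ofReal (g x) ∂ν :=
          hle g _ hgl (hK.cthickening.of_isClosed_subset (isClosed_tsupport _) hgs)
            (hgs.trans ((cthickening_mono hδ.2.le K).trans hsub)) fun x => NNReal.coe_nonneg _
      _ ≤ ∫⁻ x, (cthickening δ K).indicator 1 x ∂ν := by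
          refine lintegral_mono fun x => ?_
          by_cases hx : x ∈ cthickening δ K
          · simpa [hg_def, hx] using thickenedIndicator_le_one hδ.1 K x
          · rw [image_eq_zero_of_notMem_tsupport fun h => hx (hgs h)]; simp
      _ = ν (cthickening δ K) := lintegral_indicator_one isClosed_cthickening.measurableSet
  -- exhaust `U` by compact sets and use the inner regularity of the finite measures obtained from
  -- `η` by restriction to them
  refine Measure.le_iff.2 fun s hs => ?_
  obtain ⟨G, hGc, hGU, hGun, hGm⟩ := hU.exists_iUnion_isClosed
  set K : ℕ → Set X := fun j => G j ∩ compactCovering X j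
  have hKc : ∀ j, IsCompact (K j) := fun j => (isCompact_compactCovering X j).inter_left (hGc j)
  have hKU : ∀ j, K j ⊆ U := fun j => inter_subset_left.trans (hGU j)
  have hKm : Monotone K := fun i j hij =>
    inter_subset_inter (hGm hij) (compactCovering_subset X hij)
  have hKun : ⋃ j, K j = U := by
    refine Subset.antisymm (iUnion_subset hKU) fun x hx => ?_
    rw [← hGun] at hx
    obtain ⟨i, hi⟩ := mem_iUnion.1 hx
    obtain ⟨j, hj⟩ := mem_iUnion.1 ((iUnion_compactCovering X).symm ▸ mem_univ x)
    exact mem_iUnion.2 ⟨max i j, hGm (le_max_left _ _) hi,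
      compactCovering_subset X (le_max_right _ _) hj⟩
  have h1 : η s = η (⋃ j, s ∩ K j) := by
    rw [← inter_iUnion, hKun]
    refine (measure_inter_conull' ?_).symm
    exact measure_mono_null (fun x hx => hx.2) hηU
  have hmono : Monotone fun j => s ∩ K j := fun i j hij => inter_subset_inter_right s (hKm hij)
  rw [h1, hmono.measure_iUnion]
  refine iSup_le fun j => le_of_forall_lt fun r hr => ?_
  have hfin : IsFiniteMeasure (η.restrict (K j)) :=
    ⟨by simpa using (hcomp _ (hKc j) (hKU j)).trans_lt (hν _ (hKc j) (hKU j)).lt_top⟩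
  have hr' : r < η.restrict (K j) (s ∩ K j) := by
    rwa [Measure.restrict_apply (hs.inter (hKc j).measurableSet), inter_assoc, inter_self]
  obtain ⟨C, hCs, hC, hrC⟩ := (hs.inter (hKc j).measurableSet).exists_lt_isCompact_of_ne_top
    (measure_ne_top _ _) hr'
  calc r < η.restrict (K j) C := hrC
    _ ≤ η C := Measure.restrict_apply_le _ _
    _ ≤ ν C := hcomp C hC (hCs.trans (inter_subset_right.trans (hKU j)))
    _ ≤ ν s := measure_mono (hCs.trans inter_subset_left)

section Growth

variable {n : ℕ} {F : EuclideanSpace ℝ (Fin n) → EuclideanSpace ℝ (Fin n)}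
  {φ : ℝ → EuclideanSpace ℝ (Fin n) → EuclideanSpace ℝ (Fin n)}
  {U : Set (EuclideanSpace ℝ (Fin n))} {ρ q : EuclideanSpace ℝ (Fin n) → ℝ}

/-- The measure `q dx` on `U`. Negative values of `q` are replaced by zero, which is harmless for the
densities used here since they are almost everywhere nonnegative on `U`. -/
noncomputable abbrev densityMeasure {n : ℕ} (U : Set (EuclideanSpace ℝ (Fin n)))
    (q : EuclideanSpace ℝ (Fin n) → ℝ) : Measure (EuclideanSpace ℝ (Fin n)) :=
  (volume.restrict U).withDensity fun x => ENNReal.ofReal (q x)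

lemma aemeasurable_ofReal (hU : IsOpen U) (hq : ContinuousOn q U) :
    AEMeasurable (fun x => ENNReal.ofReal (q x)) (volume.restrict U) :=
  (hq.aemeasurable hU.measurableSet).ennreal_ofReal

lemma lintegral_densityMeasure (hU : IsOpen U) (hq : ContinuousOn q U)
    (hq0 : ∀ᵐ x, x ∈ U → 0 ≤ q x) {w : EuclideanSpace ℝ (Fin n) → ℝ} (hw : Continuous w)
    (hwc : HasCompactSupport w) (hwU : tsupport w ⊆ U) (hw0 : ∀ x, 0 ≤ w x) :
    ∫⁻ x, ENNReal.ofReal (w x) ∂(densityMeasure U q) = ENNReal.ofReal (∫ x, w x * q x) := by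
  have hintg := integrable_mul_of_tsupport_subset hU hw hwc hwU hq
  have h0 : ∀ᵐ x ∂(volume.restrict U), 0 ≤ w x * q x := by
    rw [ae_restrict_iff' hU.measurableSet]
    filter_upwards [hq0] with x hx hxU using mul_nonneg (hw0 x) (hx hxU)
  rw [densityMeasure, lintegral_withDensity_eq_lintegral_mul₀ (aemeasurable_ofReal hU hq)
    hw.measurable.ennreal_ofReal.aemeasurable,
    ← setIntegral_eq_integral_of_forall_compl_eq_zero (s := U),
    ofReal_integral_eq_lintegral_ofReal hintg.integrableOn h0]
  · refine lintegral_congr fun x => ?_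
    rw [Pi.mul_apply, ENNReal.ofReal_mul (hw0 x), mul_comm]
  · intro x hx
    rw [image_eq_zero_of_notMem_tsupport fun h => hx (hwU h), zero_mul]

/-- If the density is positive almost everywhere, `q dx` and Lebesgue measure have the same null sets
in `U`. -/
lemma densityMeasure_null_iff (hU : IsOpen U) (hq : ContinuousOn q U)
    (hq0 : ∀ᵐ x, x ∈ U → 0 < q x) {B : Set (EuclideanSpace ℝ (Fin n))} (hBU : B ⊆ U) :
    densityMeasure U q B = 0 ↔ volume B = 0 := by
  rw [densityMeasure, withDensity_apply_eq_zero' (aemeasurable_ofReal hU hq),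
    Measure.restrict_apply' hU.measurableSet]
  refine ⟨fun h => ?_, fun h => measure_mono_null (fun x hx => hx.1.2) h⟩
  refine measure_mono_null (t := ({x | ENNReal.ofReal (q x) ≠ 0} ∩ B ∩ U) ∪ {x | ¬(x ∈ U → 0 < q x)})
    (fun x hx => ?_) (measure_union_null h hq0)
  by_cases hqx : 0 < q x
  · exact Or.inl ⟨⟨by simpa using hqx, hx⟩, hBU hx⟩
  · exact Or.inr fun hn => hqx (hn (hBU hx))

/-- The mass gained by `ρ dx` under the flow in the time interval `[0, t]`: the pushforward of
`ds ⊗ ∇·(F ρ) dx` on `[0, t] × U` under `(s, x) ↦ φ (-s) x`. -/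
noncomputable def gainMeasure {n : ℕ}
    (F : EuclideanSpace ℝ (Fin n) → EuclideanSpace ℝ (Fin n))
    (φ : ℝ → EuclideanSpace ℝ (Fin n) → EuclideanSpace ℝ (Fin n))
    (U : Set (EuclideanSpace ℝ (Fin n))) (ρ : EuclideanSpace ℝ (Fin n) → ℝ) (t : ℝ) :
    Measure (EuclideanSpace ℝ (Fin n)) :=
  ((volume.restrict (Icc 0 t)).prod (densityMeasure U (divMul F ρ))).map fun p => φ (-p.1) p.2

/-- The weak form of Liouville's formula, as an inequality of measures. -/
lemma IsGlobalFlow.add_gainMeasure_le (h : IsGlobalFlow F φ) (hF : ContDiff ℝ 1 F)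
    (hU : IsOpen U) (hUφ : ∀ t x, x ∈ U → φ t x ∈ U) (hρ : ContDiffOn ℝ 1 ρ U)
    (hρ0 : ∀ᵐ x, x ∈ U → 0 < ρ x) (hD0 : ∀ᵐ x, x ∈ U → 0 < divMul F ρ x) {t : ℝ} (ht : 0 ≤ t) :
    densityMeasure U ρ + gainMeasure F φ U ρ t ≤ (densityMeasure U ρ).map (φ (-t)) := by
  have hDc := continuousOn_divMul hF hU hρ
  have hρ0' : ∀ᵐ x, x ∈ U → 0 ≤ ρ x := hρ0.mono fun x hx hxU => (hx hxU).le
  have hD0' : ∀ᵐ x, x ∈ U → 0 ≤ divMul F ρ x := hD0.mono fun x hx hxU => (hx hxU).le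
  have hmt : ∀ s, Measurable (φ s) := fun s => (h.continuous_space hF s).measurable
  have hmj : Measurable fun p : ℝ × EuclideanSpace ℝ (Fin n) => φ (-p.1) p.2 :=
    ((h.continuous hF).comp (continuous_fst.neg.prodMk continuous_snd)).measurable
  have hnull : ∀ q : EuclideanSpace ℝ (Fin n) → ℝ, densityMeasure U q Uᶜ = 0 := fun q =>
    withDensity_absolutelyContinuous _ _
      (by rw [Measure.restrict_apply' hU.measurableSet, compl_inter_self, measure_empty])
  refine measure_le_of_lintegral_le hU ?_ ?_ ?_
  · rw [Measure.add_apply, hnull, zero_add, gainMeasure,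
      Measure.map_apply hmj hU.measurableSet.compl]
    refine measure_mono_null (t := univ ×ˢ Uᶜ) (fun p hp => ⟨mem_univ _, fun hpU => hp ?_⟩) ?_
    · exact hUφ _ _ hpU
    · rw [Measure.prod_prod, hnull, mul_zero]
  · intro K hK hKU
    rw [Measure.map_apply (hmt _) hK.measurableSet]
    have hK' : IsCompact (φ (-t) ⁻¹' K) := by
      have : φ (-t) ⁻¹' K = φ t '' K := by
        ext x
        exact ⟨fun hx => ⟨_, hx, h.apply_neg t x⟩, by
          rintro ⟨y, hy, rfl⟩; rwa [mem_preimage, h.neg_apply]⟩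
      rw [this]; exact hK.image (h.continuous_space hF t)
    have hKU' : φ (-t) ⁻¹' K ⊆ U := fun x hx => by
      rw [← h.apply_neg t x]; exact hUφ _ _ (hKU hx)
    rw [densityMeasure, withDensity_apply _ hK'.measurableSet,
      Measure.restrict_restrict_of_subset hKU']
    exact ((hρ.continuousOn.mono hKU').integrableOn_compact hK').lintegral_lt_top.ne
  · intro g C hg hc hgU hg0
    -- `m` has the nonnegative derivative `m'`, so `m'` is integrable and `m t - m 0 = ∫ m'`
    set m : ℝ → ℝ := fun s => ∫ x, g (φ (-s) x) * ρ x with hm_def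
    set m' : ℝ → ℝ := fun s => ∫ x, g (φ (-s) x) * divMul F ρ x with hm'_def
    have hm : ∀ s, HasDerivAt m (m' s) s := fun s =>
      h.hasDerivAt_integral hF hU hUφ hρ hg.locallyLipschitz hc hgU s
    have hsU : ∀ s, tsupport (fun x => g (φ (-s) x)) ⊆ U := fun s =>
      (h.tsupport_comp_subset hF hc s).trans <| by
        rintro _ ⟨y, hy, rfl⟩
        exact hUφ _ _ (hgU hy)
    have hmρ : ∀ s, ∫⁻ x, ENNReal.ofReal (g (φ (-s) x)) ∂(densityMeasure U ρ) =
        ENNReal.ofReal (m s) := fun s =>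
      lintegral_densityMeasure hU hρ.continuousOn hρ0'
        (hg.continuous.comp (h.continuous_space hF _)) (h.hasCompactSupport_comp hF hc s) (hsU s)
        fun x => hg0 _
    have hmD : ∀ s, ∫⁻ x, ENNReal.ofReal (g (φ (-s) x)) ∂(densityMeasure U (divMul F ρ)) =
        ENNReal.ofReal (m' s) := fun s =>
      lintegral_densityMeasure hU hDc hD0'
        (hg.continuous.comp (h.continuous_space hF _)) (h.hasCompactSupport_comp hF hc s) (hsU s)
        fun x => hg0 _
    have hpos : ∀ q : EuclideanSpace ℝ (Fin n) → ℝ, (∀ᵐ x, x ∈ U → 0 ≤ q x) → ∀ s,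
        0 ≤ ∫ x, g (φ (-s) x) * q x := fun q hq s => by
      refine integral_nonneg_of_ae ?_
      filter_upwards [hq] with x hx
      by_cases hxU : x ∈ U
      · exact mul_nonneg (hg0 _) (hx hxU)
      · have : g (φ (-s) x) = 0 :=
          image_eq_zero_of_notMem_tsupport (f := fun x => g (φ (-s) x)) fun h' => hxU (hsU s h')
        simp [this]
    have hdm_nonneg : ∀ s, 0 ≤ m' s := hpos _ hD0'
    have hintg : IntervalIntegrable m' volume 0 t :=
      intervalIntegral.intervalIntegrable_deriv_of_nonneg
        (fun s _ => (hm s).continuousAt.continuousWithinAt) (fun s _ => hm s) fun s _ => hdm_nonneg s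
    have hFTC : ∫ s in Icc 0 t, m' s = m t - m 0 := by
      rw [integral_Icc_eq_integral_Ioc, ← intervalIntegral.integral_of_le ht]
      exact intervalIntegral.integral_eq_sub_of_hasDerivAt (fun s _ => hm s) hintg
    have hgm : Measurable fun x => ENNReal.ofReal (g x) :=
      hg.continuous.measurable.ennreal_ofReal
    have hgain : ∫⁻ x, ENNReal.ofReal (g x) ∂(gainMeasure F φ U ρ t) =
        ENNReal.ofReal (m t - m 0) := by
      rw [gainMeasure, lintegral_map hgm hmj,
        lintegral_prod (fun p : ℝ × EuclideanSpace ℝ (Fin n) => ENNReal.ofReal (g (φ (-p.1) p.2)))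
          (hgm.comp hmj).aemeasurable]
      simp only [hmD]
      rw [← hFTC, ofReal_integral_eq_lintegral_ofReal]
      · rwa [← IntegrableOn, integrableOn_Icc_iff_integrableOn_Ioc,
          ← intervalIntegrable_iff_integrableOn_Ioc_of_le ht]
      · exact ae_of_all _ hdm_nonneg
    have hm0 := hmρ 0
    simp only [neg_zero, h.zero] at hm0
    have hle : 0 ≤ m t - m 0 := by
      rw [← hFTC]; exact integral_nonneg hdm_nonneg
    rw [lintegral_add_measure, hgain, lintegral_map hgm (hmt _), hmρ, hm0,
      ← ENNReal.ofReal_add (hpos ρ hρ0' 0) hle]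
    exact ENNReal.ofReal_le_ofReal (by linarith)

end Growth

/-! ### Recurrence and convergence -/

section Recurrence

variable {n : ℕ} {F : EuclideanSpace ℝ (Fin n) → EuclideanSpace ℝ (Fin n)}
  {φ : ℝ → EuclideanSpace ℝ (Fin n) → EuclideanSpace ℝ (Fin n)}

/-- A quantitative Poincaré recurrence argument. If the flow never decreases `μ`, and in unit time
increases it by at least `κ`, then `κ` does not charge the set of points of `P` that return to `P`
infinitely often, provided `μ P` is finite. -/
lemma IsGlobalFlow.measure_recurrent_eq_zero (h : IsGlobalFlow F φ) (hF : ContDiff ℝ 1 F)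
    {μ κ : Measure (EuclideanSpace ℝ (Fin n))}
    (hμ : ∀ t, 0 ≤ t → ∀ B, MeasurableSet B → μ B ≤ μ (φ (-t) ⁻¹' B))
    (hκ : ∀ B, MeasurableSet B → μ B + κ B ≤ μ (φ (-1) ⁻¹' B))
    {P : Set (EuclideanSpace ℝ (Fin n))} (hP : MeasurableSet P) (hPfin : μ P ≠ ∞) :
    κ {x | x ∈ P ∧ ∃ᶠ k : ℕ in atTop, φ k x ∈ P} = 0 := by
  have hmt : ∀ s, Measurable (φ s) := fun s => (h.continuous_space hF s).measurable
  set S : Set (EuclideanSpace ℝ (Fin n)) := {x | x ∈ P ∧ ∃ᶠ k : ℕ in atTop, φ k x ∈ P} with hS_def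
  have hSm : MeasurableSet S := by
    have : S = P ∩ limsup (fun k : ℕ => φ k ⁻¹' P) atTop := by
      ext x; simp [hS_def, mem_limsup_iff_frequently_mem]
    rw [this]
    exact hP.inter (MeasurableSet.measurableSet_limsup fun k => hmt k hP)
  have hshift : ∀ (m : ℕ) x, φ m x ∈ P → x ∈ S → φ m x ∈ S := by
    intro m x hmx hx
    refine ⟨hmx, frequently_atTop.2 fun a => ?_⟩
    obtain ⟨b, hb, hbP⟩ := frequently_atTop.1 hx.2 (a + m)
    refine ⟨b - m, by omega, ?_⟩
    rw [← h.add]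
    rwa [Nat.cast_sub (by omega), sub_add_cancel]
  -- `R m` is the part of `S` whose first return to `P` happens at time `m + 1`
  let R : ℕ → Set (EuclideanSpace ℝ (Fin n)) := fun m =>
    {x | x ∈ S ∧ φ ((m : ℝ) + 1) x ∈ P ∧ ∀ k < m, φ ((k : ℝ) + 1) x ∉ P}
  have hRm : ∀ m, MeasurableSet (R m) := fun m => by
    have : R m = S ∩ (φ ((m : ℝ) + 1) ⁻¹' P ∩ ⋂ k, ⋂ (_ : k < m), (φ ((k : ℝ) + 1) ⁻¹' P)ᶜ) := by
      ext x; simp [R, S]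
    rw [this]
    exact hSm.inter ((hmt _ hP).inter
      (MeasurableSet.iInter fun k => MeasurableSet.iInter fun _ => (hmt _ hP).compl))
  have hSR : S = ⋃ m, R m := by
    refine Subset.antisymm (fun x hx => ?_) (iUnion_subset fun m x hx => hx.1)
    classical
    have hex : ∃ m : ℕ, φ ((m : ℝ) + 1) x ∈ P := by
      obtain ⟨b, hb, hbP⟩ := frequently_atTop.1 hx.2 1
      refine ⟨b - 1, ?_⟩
      rwa [Nat.cast_sub hb, Nat.cast_one, sub_add_cancel]
    exact mem_iUnion.2 ⟨Nat.find hex, hx, Nat.find_spec hex, fun k hk => Nat.find_min hex hk⟩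
  have hRd : Pairwise (Function.onFun Disjoint R) := by
    have aux : ∀ i j, i < j → Disjoint (R i) (R j) := fun i j hij =>
      Set.disjoint_left.2 fun x hi hj => hj.2.2 i hij hi.2.1
    intro i j hij
    rcases lt_or_gt_of_ne hij with h' | h'
    · exact aux i j h'
    · exact (aux j i h').symm
  -- `Q m` is the image of `R m` under the first return map
  let Q : ℕ → Set (EuclideanSpace ℝ (Fin n)) := fun m => φ (-((m : ℝ) + 1)) ⁻¹' R m
  have hQm : ∀ m, MeasurableSet (Q m) := fun m => hmt _ (hRm m)
  have hQS : ⋃ m, Q m ⊆ S := by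
    refine iUnion_subset fun m x hx => ?_
    have h1 := hshift (m + 1) (φ (-((m : ℝ) + 1)) x)
      (by push_cast; exact hx.2.1) hx.1
    push_cast at h1
    rwa [h.apply_neg] at h1
  have hQd : Pairwise (Function.onFun Disjoint Q) := by
    have aux : ∀ i j, i < j → Disjoint (Q i) (Q j) := by
      intro i j hij
      refine Set.disjoint_left.2 fun x hi hj => ?_
      refine hj.2.2 (j - i - 1) (by omega) ?_
      rw [← h.add, Nat.sub_sub, Nat.cast_sub (by omega)]
      push_cast
      have : (j : ℝ) - (i + 1) + 1 + -(j + 1) = -((i : ℝ) + 1) := by ring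
      rw [this]
      exact hi.1.1
    intro i j hij
    rcases lt_or_gt_of_ne hij with h' | h'
    · exact aux i j h'
    · exact (aux j i h').symm
  have hgrow : ∀ m, μ (R m) + κ (R m) ≤ μ (Q m) := by
    intro m
    refine (hκ _ (hRm m)).trans ((hμ m (Nat.cast_nonneg m) _ (hmt _ (hRm m))).trans_eq ?_)
    congr 1
    ext x
    simp only [Q, mem_preimage, ← h.add]
    rw [show (-1 : ℝ) + -(m : ℝ) = -((m : ℝ) + 1) by ring]
  have hmain : μ S + κ S ≤ μ S := by
    calc μ S + κ S = ∑' m, (μ (R m) + κ (R m)) := by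
          rw [ENNReal.tsum_add, ← measure_iUnion hRd hRm, ← measure_iUnion hRd hRm, ← hSR]
      _ ≤ ∑' m, μ (Q m) := ENNReal.tsum_le_tsum hgrow
      _ = μ (⋃ m, Q m) := (measure_iUnion hQd hQm).symm
      _ ≤ μ S := measure_mono hQS
  have hSfin : μ S ≠ ∞ := ne_top_of_le_ne_top hPfin (measure_mono fun x hx => hx.1)
  by_contra hne
  exact absurd hmain (ENNReal.lt_add_right hSfin hne).not_ge

/-- Convergence to a compact invariant set along integer times implies convergence along real times. -/
lemma IsGlobalFlow.tendsto_infDist (h : IsGlobalFlow F φ) (hF : ContDiff ℝ 1 F)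
    {A : Set (EuclideanSpace ℝ (Fin n))} (hA : IsCompact A) (hAφ : ∀ t x, x ∈ A → φ t x ∈ A)
    {x : EuclideanSpace ℝ (Fin n)}
    (hx : ∀ j : ℕ, ∀ᶠ k : ℕ in atTop, infDist (φ k x) A < 1 / ((j : ℝ) + 1)) :
    Tendsto (fun t : ℝ => infDist (φ t x) A) atTop (𝓝 0) := by
  -- the distance to the empty set is zero by convention
  rcases A.eq_empty_or_nonempty with rfl | hne
  · simp only [infDist_empty]
    exact tendsto_const_nhds
  rw [Metric.tendsto_atTop]
  intro ε hε
  have hopen : IsOpen {q : ℝ × EuclideanSpace ℝ (Fin n) | infDist (φ q.1 q.2) A < ε} :=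
    isOpen_lt ((continuous_infDist_pt A).comp (h.continuous hF)) continuous_const
  -- points close enough to `A` stay `ε`-close to `A` during a unit of time
  have htube : Icc (0 : ℝ) 1 ×ˢ A ⊆
      {q : ℝ × EuclideanSpace ℝ (Fin n) | infDist (φ q.1 q.2) A < ε} := by
    rintro ⟨s, y⟩ ⟨-, hy⟩
    change infDist (φ s y) A < ε
    rwa [infDist_zero_of_mem (hAφ s y hy)]
  obtain ⟨v, w, -, hw, hIv, hAw, hvw⟩ := generalized_tube_lemma isCompact_Icc hA hopen htube
  obtain ⟨δ, hδ, hδw⟩ := hA.exists_thickening_subset_open hw hAw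
  obtain ⟨j, hj⟩ := exists_nat_one_div_lt hδ
  obtain ⟨N, hN⟩ := eventually_atTop.1 (hx j)
  refine ⟨N, fun t ht => ?_⟩
  have ht0 : 0 ≤ t := (Nat.cast_nonneg N).trans ht
  have h1 : φ (⌊t⌋₊ : ℝ) x ∈ w :=
    hδw ((mem_thickening_iff_infDist_lt hne).2 ((hN _ (Nat.le_floor ht)).trans hj))
  have h2 : (t - ⌊t⌋₊, φ (⌊t⌋₊ : ℝ) x) ∈ v ×ˢ w :=
    ⟨hIv ⟨by linarith [Nat.floor_le ht0], by linarith [Nat.lt_floor_add_one t]⟩, h1⟩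
  have h3 := hvw h2
  simp only [mem_ofPred_eq, ← h.add, sub_add_cancel] at h3
  rwa [Real.dist_eq, sub_zero, abs_of_nonneg infDist_nonneg]

end Recurrence

theorem almost_global_stability_continuous_time {n : ℕ}
    (F : EuclideanSpace ℝ (Fin n) → EuclideanSpace ℝ (Fin n))
    (hF : ContDiff ℝ 1 F)
    (φ : ℝ → EuclideanSpace ℝ (Fin n) → EuclideanSpace ℝ (Fin n))
    (hφ0 : ∀ x, φ 0 x = x)
    (hφadd : ∀ s t x, φ (s + t) x = φ s (φ t x))
    (hφderiv : ∀ t x, HasDerivAt (fun τ => φ τ x) (F (φ t x)) t)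
    (A : Set (EuclideanSpace ℝ (Fin n)))
    (hA : IsCompact A)
    (hAinv : ∀ t, φ t '' A = A)
    (ρ : EuclideanSpace ℝ (Fin n) → ℝ)
    (hρC1 : ContDiffOn ℝ 1 ρ Aᶜ)
    (hCLD1 : ∀ᵐ x ∂volume, x ∈ Aᶜ → 0 < ρ x)
    (hCLD2 : ∀ ε > 0, IntegrableOn ρ {x | ε ≤ infDist x A} volume)
    (hCLD3 : ∀ᵐ x ∂volume, x ∈ Aᶜ → 0 < divMul F ρ x) :
    ∀ᵐ x ∂volume, Tendsto (fun t : ℝ => infDist (φ t x) A) atTop (nhds 0) := by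
  have h : IsGlobalFlow F φ := ⟨hφ0, hφadd, hφderiv⟩
  have hmt : ∀ s, Measurable (φ s) := fun s => (h.continuous_space hF s).measurable
  have hmj : Measurable fun p : ℝ × EuclideanSpace ℝ (Fin n) => φ (-p.1) p.2 :=
    ((h.continuous hF).comp (continuous_fst.neg.prodMk continuous_snd)).measurable
  have hAφ : ∀ t x, x ∈ A → φ t x ∈ A := fun t x hx => hAinv t ▸ mem_image_of_mem _ hx
  have hUφ : ∀ t x, x ∈ Aᶜ → φ t x ∈ Aᶜ := fun t x hx hn => hx <| by
    rw [← h.neg_apply t x]; exact hAφ _ _ hn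
  have hU : IsOpen Aᶜ := hA.isClosed.isOpen_compl
  set μ := densityMeasure Aᶜ ρ with hμ_def
  have hgrow : ∀ t, 0 ≤ t → ∀ B, MeasurableSet B →
      μ B + gainMeasure F φ Aᶜ ρ t B ≤ μ (φ (-t) ⁻¹' B) := fun t ht B hB => by
    rw [← Measure.map_apply (hmt _) hB, ← Measure.add_apply]
    exact h.add_gainMeasure_le hF hU hUφ hρC1 hCLD1 hCLD3 ht B
  have hμ : ∀ t, 0 ≤ t → ∀ B, MeasurableSet B → μ B ≤ μ (φ (-t) ⁻¹' B) := fun t ht B hB =>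
    le_self_add.trans (hgrow t ht B hB)
  have hμ0 : ∀ B ⊆ Aᶜ, (μ B = 0 ↔ volume B = 0) := fun B hB =>
    densityMeasure_null_iff hU hρC1.continuousOn hCLD1 hB
  -- since `μ B ≤ μ (φ (-t) ⁻¹' B)`, the flow carries null subsets of `U` to null sets
  -- backward in time
  have hnull : ∀ t, 0 ≤ t → ∀ B ⊆ Aᶜ, MeasurableSet B → volume (φ (-t) ⁻¹' B) = 0 →
      volume B = 0 := by
    intro t ht B hBU hB hv
    rw [← hμ0 B hBU]
    have hsub : φ (-t) ⁻¹' B ⊆ Aᶜ := fun x hx => by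
      rw [← h.apply_neg t x]; exact hUφ _ _ (hBU hx)
    exact le_antisymm ((hμ t ht B hB).trans_eq ((hμ0 _ hsub).2 hv)) zero_le
  have main : ∀ j : ℕ, ∀ᵐ x, x ∈ Aᶜ →
      ∀ᶠ k : ℕ in atTop, infDist (φ k x) A < 1 / ((j : ℝ) + 1) := by
    intro j
    set P : Set (EuclideanSpace ℝ (Fin n)) := {x | 1 / ((j : ℝ) + 1) ≤ infDist x A} with hP_def
    have hj0 : (0 : ℝ) < 1 / ((j : ℝ) + 1) := Nat.one_div_pos_of_nat
    have hP : MeasurableSet P := measurableSet_le measurable_const measurable_infDist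
    have hPU : P ⊆ Aᶜ := fun x hx hxA => by
      rw [hP_def, mem_ofPred_eq, infDist_zero_of_mem hxA] at hx
      exact hx.not_gt hj0
    have hPfin : μ P ≠ ∞ := by
      rw [hμ_def, densityMeasure, withDensity_apply _ hP,
        Measure.restrict_restrict_of_subset hPU]
      exact (hCLD2 _ hj0).lintegral_lt_top.ne
    have hS0 := h.measure_recurrent_eq_zero hF hμ (fun B hB => hgrow 1 zero_le_one B hB) hP hPfin
    set S : Set (EuclideanSpace ℝ (Fin n)) := {x | x ∈ P ∧ ∃ᶠ k : ℕ in atTop, φ k x ∈ P}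
      with hS_def
    have hSU : S ⊆ Aᶜ := fun x hx => hPU hx.1
    have hSm : MeasurableSet S := by
      have : S = P ∩ limsup (fun k : ℕ => φ k ⁻¹' P) atTop := by
        ext x; simp [hS_def, mem_limsup_iff_frequently_mem]
      rw [this]
      exact hP.inter (MeasurableSet.measurableSet_limsup fun k => hmt k hP)
    -- `κ 1 S = 0` yields a time `s ∈ [0, 1]` at which `φ (-s) ⁻¹' S` is null for `∇·(F ρ) dx`,
    -- hence for Lebesgue measure, and `S` is null by the backward invariance of null sets
    have hvS : volume S = 0 := by
      rw [gainMeasure, Measure.map_apply hmj hSm, Measure.measure_prod_null (hmj hSm)] at hS0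
      have hne : (ae (volume.restrict (Icc (0 : ℝ) 1))).NeBot := by
        rw [ae_neBot]; simp
      obtain ⟨s, hs, hs1⟩ := (hS0.and (ae_restrict_mem measurableSet_Icc)).exists
      refine hnull s hs1.1 S hSU hSm ?_
      refine (densityMeasure_null_iff hU (continuousOn_divMul hF hU hρC1) hCLD3 ?_).1 hs
      intro x hx
      rw [← h.apply_neg s x]; exact hUφ _ _ (hSU hx)
    -- if the orbit of `x` visits `P` infinitely often, then every visit takes place in `S`
    have hvSk : ∀ k : ℕ, volume (φ k ⁻¹' S) = 0 := by
      intro k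
      refine hnull k (Nat.cast_nonneg k) _ (fun x hx => ?_) (hmt _ hSm) ?_
      · rw [← h.neg_apply k x]; exact hUφ _ _ (hSU hx)
      · rw [← preimage_comp, show φ k ∘ φ (-k) = id from funext (h.apply_neg k)]
        exact hvS
    refine measure_mono_null (t := ⋃ k : ℕ, φ k ⁻¹' S) (fun x hx => ?_)
      (measure_iUnion_null hvSk)
    have hfr : ∃ᶠ k : ℕ in atTop, φ k x ∈ P := by
      intro hev
      refine hx fun _ => hev.mono fun k hk => ?_
      simpa [hP_def] using hk
    obtain ⟨m, hm⟩ := hfr.exists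
    refine mem_iUnion.2 ⟨m, hm, frequently_atTop.2 fun a => ?_⟩
    obtain ⟨b, hb, hbP⟩ := frequently_atTop.1 hfr (a + m)
    refine ⟨b - m, by omega, ?_⟩
    rw [← h.add]
    rwa [Nat.cast_sub (by omega), sub_add_cancel]
  filter_upwards [ae_all_iff.2 main] with x hx
  refine h.tendsto_infDist hF hA hAφ fun j => ?_
  by_cases hxA : x ∈ A
  · refine Eventually.of_forall fun k => ?_
    rw [infDist_zero_of_mem (hAφ _ _ hxA)]
    exact Nat.one_div_pos_of_nat
  · exact hx j hxA
end

section
/- Let F : ℝⁿ → ℝⁿ and let φ : ℝ → ℝⁿ → ℝⁿ be a global flow for F. Let A ⊆ ℝⁿ be nonempty, let M > 0 and 0 < ε₁ < ε₂, and suppose ‖F x‖ ≤ M for all x with dist(x, A) ≤ ε₂. Fix x ∈ ℝⁿ and s < t such that dist(φ s x, A) = ε₁, dist(φ t x, A) = ε₂, and dist(φ τ x, A) ≤ ε₂ for all τ ∈ [s, t]. Then t − s ≥ (ε₂ − ε₁) / M. -/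
/-!
Along the trajectory the speed is at most `M` on `[s, t]`, so by the mean value inequality the
displacement between times `s` and `t` is at most `M * (t - s)`. The distance to `A` is
1-Lipschitz, so its increase `ε₂ - ε₁` is bounded by that displacement.
-/

open Metric Filter

theorem transition_time_lower_bound {n : ℕ}
    (F : EuclideanSpace ℝ (Fin n) → EuclideanSpace ℝ (Fin n))
    (φ : ℝ → EuclideanSpace ℝ (Fin n) → EuclideanSpace ℝ (Fin n))
    (hφ0 : ∀ x, φ 0 x = x)
    (hφadd : ∀ s t x, φ (s + t) x = φ s (φ t x))
    (hφderiv : ∀ t x, HasDerivAt (fun τ => φ τ x) (F (φ t x)) t)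
    (A : Set (EuclideanSpace ℝ (Fin n))) (hA : A.Nonempty)
    (M ε₁ ε₂ : ℝ) (hM : 0 < M) (hε₁ : 0 < ε₁) (hε₁₂ : ε₁ < ε₂)
    (hFbound : ∀ x, infDist x A ≤ ε₂ → ‖F x‖ ≤ M)
    (x : EuclideanSpace ℝ (Fin n)) (s t : ℝ) (hst : s < t)
    (hs : infDist (φ s x) A = ε₁)
    (ht : infDist (φ t x) A = ε₂)
    (htraj : ∀ τ ∈ Set.Icc s t, infDist (φ τ x) A ≤ ε₂) :
    (ε₂ - ε₁) / M ≤ t - s := by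
  have hmove : ‖φ t x - φ s x‖ ≤ M * (t - s) :=
    norm_image_sub_le_of_norm_deriv_le_segment'
      (fun τ _ => (hφderiv τ x).hasDerivWithinAt)
      (fun τ hτ => hFbound _ (htraj τ (Set.Ico_subset_Icc_self hτ)))
      t (Set.right_mem_Icc.mpr hst.le)
  have hdist : infDist (φ t x) A ≤ infDist (φ s x) A + dist (φ t x) (φ s x) :=
    infDist_le_infDist_add_dist
  rw [hs, ht, dist_eq_norm] at hdist
  rw [div_le_iff₀ hM]
  linarith
end

section
/- Let F : ℝⁿ → ℝⁿ and let φ : ℝ → ℝⁿ → ℝⁿ be a global flow for F with φ jointly continuous. Let A ⊆ ℝⁿ be a nonempty compact set, and suppose there exist M > 0 and ε₂ > 0 such that ‖F x‖ ≤ M for all x with dist(x, A) ≤ ε₂. Fix τ > 0 and x ∈ ℝⁿ, and suppose that for every positive integer n, dist(φ (k · τ / n) x, A) → 0 as k → ∞ (k ranging over ℕ). Then dist(φ t x, A) → 0 as t → ∞ (t ranging over ℝ). -/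
open Metric Filter

/-!
Given `ε ≤ ε₂`, take a lattice of step `h = τ / N` with `2 * M * h < ε / 2`. For large `k` the orbit
is within `ε / 2` of `A` at time `k * h`. During the following time `h` it cannot move further than
`2 * M * h < ε / 2`: this follows from the fencing inequality
`image_norm_le_of_norm_deriv_right_lt_deriv_boundary` with fence `t ↦ 2 * M * (t - k * h)`. The
fence needs a speed bound only at times when the displacement equals the fence; there the orbit is
still within `ε ≤ ε₂` of `A`, so its speed is at most `M < 2 * M`.
-/

/-- If `u` starts within `δ` of `A` and has speed at most `M` in the `ε₂`-neighbourhood of `A`, it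
moves by at most `2 * M * h` over a time `h` for which `δ + 2 * M * h ≤ ε₂`. No a priori bound on
the distance of `u` to `A` after the initial time is needed. -/
theorem dist_le_of_speed_bound_near {E : Type*} [NormedAddCommGroup E] [NormedSpace ℝ E]
    {u v : ℝ → E} (hu : ∀ t, HasDerivAt u (v t) t) {A : Set E} {M ε₂ δ a h : ℝ} (hM : 0 < M)
    (hv : ∀ t, infDist (u t) A ≤ ε₂ → ‖v t‖ ≤ M)
    (ha : infDist (u a) A ≤ δ) (hh : δ + 2 * M * h ≤ ε₂) {t : ℝ} (ht : t ∈ Set.Icc a (a + h)) :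
    dist (u t) (u a) ≤ 2 * M * (t - a) := by
  have hd : ∀ s, HasDerivAt (fun s => u s - u a) (v s) s := fun s => (hu s).sub_const _
  have hB : ∀ s, HasDerivAt (fun s : ℝ => 2 * M * (s - a)) (2 * M) s := fun s => by
    simpa using ((hasDerivAt_id s).sub_const a).const_mul (2 * M)
  rw [dist_eq_norm]
  refine image_norm_le_of_norm_deriv_right_lt_deriv_boundary
    (f := fun s => u s - u a) (f' := v) (a := a) (b := a + h)
    (fun s _ => (hd s).continuousAt.continuousWithinAt)
    (fun s _ => (hd s).hasDerivWithinAt) (by simp) hB ?_ ht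
  intro s hs heq
  have h1 : infDist (u s) A ≤ infDist (u a) A + dist (u s) (u a) := infDist_le_infDist_add_dist
  have h2 : 2 * M * (s - a) ≤ 2 * M * h := by
    have := hs.2
    gcongr
    linarith
  rw [dist_eq_norm, heq] at h1
  have := hv s (by linarith)
  linarith

theorem convergence_along_lattices_implies_continuous_convergence {n : ℕ}
    (F : EuclideanSpace ℝ (Fin n) → EuclideanSpace ℝ (Fin n))
    (φ : ℝ → EuclideanSpace ℝ (Fin n) → EuclideanSpace ℝ (Fin n))
    (hφcont : Continuous fun p : ℝ × EuclideanSpace ℝ (Fin n) => φ p.1 p.2)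
    (hφ0 : ∀ x, φ 0 x = x)
    (hφadd : ∀ s t x, φ (s + t) x = φ s (φ t x))
    (hφderiv : ∀ t x, HasDerivAt (fun τ => φ τ x) (F (φ t x)) t)
    (A : Set (EuclideanSpace ℝ (Fin n))) (hA : IsCompact A) (hAne : A.Nonempty)
    (M ε₂ : ℝ) (hM : 0 < M) (hε₂ : 0 < ε₂)
    (hFbound : ∀ x, infDist x A ≤ ε₂ → ‖F x‖ ≤ M)
    (τ : ℝ) (hτ : 0 < τ)
    (x : EuclideanSpace ℝ (Fin n))
    (hlattice : ∀ n' : ℕ, 0 < n' →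
      Tendsto (fun k : ℕ => infDist (φ ((k : ℝ) * τ / (n' : ℝ)) x) A) atTop (nhds 0)) :
    Tendsto (fun t : ℝ => infDist (φ t x) A) atTop (nhds 0) := by
  rw [Metric.tendsto_atTop]
  intro ε₀ hε₀
  set ε := min ε₀ ε₂
  have hε : 0 < ε := lt_min hε₀ hε₂
  obtain ⟨N, hN⟩ := exists_nat_gt (4 * M * τ / ε)
  have hNpos : (0 : ℝ) < N := lt_of_le_of_lt (by positivity) hN
  have hstep : 2 * M * (τ / N) < ε / 2 := by
    rw [div_lt_iff₀ hε] at hN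
    rw [← mul_div_assoc, div_lt_iff₀ hNpos]
    linarith
  set h := τ / (N : ℝ) with hh
  have hpos : 0 < h := div_pos hτ hNpos
  obtain ⟨K, hK⟩ := (Metric.tendsto_atTop.1 (hlattice N (by exact_mod_cast hNpos))) (ε / 2)
    (half_pos hε)
  refine ⟨K * h, fun t ht => ?_⟩
  have htpos : 0 ≤ t / h := div_nonneg (le_trans (by positivity) ht) hpos.le
  -- The last lattice time before `t` is `⌊t / h⌋₊ * h`.
  set k := ⌊t / h⌋₊
  have hKk : K ≤ k := Nat.le_floor ((le_div_iff₀ hpos).2 ht)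
  have hk1 : k * h ≤ t := (le_div_iff₀ hpos).1 (Nat.floor_le htpos)
  have hk2 : t ≤ k * h + h := by
    have := (div_lt_iff₀ hpos).1 (Nat.lt_floor_add_one (t / h))
    linarith
  have hk := hK k hKk
  rw [Real.dist_0_eq_abs, abs_of_nonneg infDist_nonneg, mul_div_assoc, ← hh] at hk
  have hmove := dist_le_of_speed_bound_near (fun s => hφderiv s x) hM
    (fun s => hFbound (φ s x)) hk.le
    (by linarith [min_le_right ε₀ ε₂] : ε / 2 + 2 * M * h ≤ ε₂) ⟨hk1, hk2⟩
  have hle : 2 * M * (t - k * h) ≤ 2 * M * h := by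
    gcongr
    linarith
  have htri : infDist (φ t x) A ≤ infDist (φ (k * h) x) A + dist (φ t x) (φ (k * h) x) :=
    infDist_le_infDist_add_dist
  rw [Real.dist_0_eq_abs, abs_of_nonneg infDist_nonneg]
  linarith [min_le_left ε₀ ε₂]
end

section
/- Let F : ℝⁿ → ℝⁿ be continuously differentiable with global flow φ : ℝ → ℝⁿ → ℝⁿ, let A ⊆ ℝⁿ be a compact set invariant under the flow (φ t '' A = A for all t ∈ ℝ), and suppose ρ : ℝⁿ → ℝ is continuously differentiable on Aᶜ, satisfies ρ x > 0 for Lebesgue-a.e. x ∈ Aᶜ, satisfies ∫_{x : dist(x, A) ≥ ε} ρ x dx < ∞ for every ε > 0, and satisfies ∇·(F ρ)(x) > 0 for Lebesgue-a.e. x ∈ Aᶜ. Then there exists a Lebesgue-null set N ⊆ ℝⁿ such that for every x ∉ N and every rational q > 0, dist(φ (k · q) x, A) → 0 as k → ∞ (k ranging over ℕ); i.e., almost every point converges to A along every rational-step time lattice simultaneously. -/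
open MeasureTheory Metric Filter

/-!
The measure `ν` with density `ρ` off `A` is strictly expanded by the forward flow, has finite mass
away from `A`, and this is incompatible with recurrence to a set at positive distance from `A`.

* **Expansion.** Along an orbit in `Aᶜ`, Liouville's formula gives
  `d/ds (ρ (φ s x) * det (Dφ_s x)) = ∇·(F ρ) (φ s x) * det (Dφ_s x)`, which is nonnegative, and
  positive at `s = 0` for almost every `x`. Hence `ρ x < det (Dφ_t x) * ρ (φ t x)` for `t > 0`
  (`IsC1Flow.density_lt`), and the change of variables formula yields `ν S ≤ ν (φ t '' S)`,
  strictly if `S` has positive volume and finite `ν`-mass (`IsC1Flow.measure_image`).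
* **Differentiability of the flow.** Only almost every `x` matters. By Grönwall, `φ t` is locally
  Lipschitz, uniformly for `t` in compact sets (`IsC1Flow.lipschitz_local`). By Rademacher and
  Fubini, for almost every `x` the map `φ t` is differentiable at `x` for almost every `t`.
  Differentiating `φ t x = x + ∫ s in 0..t, F (φ s x)` under the integral sign upgrades this to
  every `t`, and gives the variational equation for `Dφ_t x` (`IsC1Flow.variational`).
* **Recurrence.** Fix `q > 0` and `P = {x | ε ≤ dist(x, A)}`, so `ν P < ∞`. The first-return map of
  `φ q` on the set `W` of points of `P` returning infinitely often maps `W` injectively into itself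
  and equals `φ (k q)` on the set of points with first-return time `k`. If `W` had positive volume
  it would strictly increase `ν W < ∞`, so `W` is null (`IsC1Flow.recurrent_null`). Preimages of
  null sets under the forward flow are null, again by expansion. The union of these preimages over
  all times `k q`, rational `q > 0` and `ε = 1 / (m + 1)` is the exceptional set.
-/

open Set Topology
open scoped NNReal

/-! ### Flows of continuously differentiable vector fields -/

variable {E : Type*} [NormedAddCommGroup E]

/-- A continuous function that is almost everywhere positive on an open set is nonnegative
there, since a nonempty open set has positive measure. -/
lemma nonneg_of_ae_pos [MeasurableSpace E] {μ : Measure E} [μ.IsOpenPosMeasure]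
    {U : Set E} (hU : IsOpen U) {g : E → ℝ} (hg : ContinuousOn g U)
    (h : ∀ᵐ x ∂μ, x ∈ U → 0 < g x) : ∀ x ∈ U, 0 ≤ g x := by
  by_contra! hneg
  obtain ⟨x, hx, hgx⟩ := hneg
  refine ((hg.isOpen_inter_preimage hU (isOpen_Iio (a := (0 : ℝ)))).measure_pos μ
    ⟨x, hx, hgx⟩).ne' (measure_mono_null ?_ (ae_iff.1 h))
  rintro y ⟨hyU, hy⟩ h'
  exact lt_asymm (h' hyU) hy

variable [NormedSpace ℝ E]

/-- `φ` is a global flow, defined for all times and all points, of the `C¹` vector field `F`. -/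
structure IsC1Flow (F : E → E) (φ : ℝ → E → E) : Prop where
  contDiff : ContDiff ℝ 1 F
  zero : ∀ x, φ 0 x = x
  add : ∀ s t x, φ (s + t) x = φ s (φ t x)
  deriv : ∀ t x, HasDerivAt (fun τ => φ τ x) (F (φ t x)) t

namespace IsC1Flow

variable {F : E → E} {φ : ℝ → E → E}

lemma reverse (h : IsC1Flow F φ) : IsC1Flow (fun x => -F x) (fun t => φ (-t)) where
  contDiff := h.contDiff.neg
  zero x := by simpa using h.zero x
  add s t x := by rw [neg_add, h.add]
  deriv t x := by
    simpa [Function.comp_def] using (h.deriv (-t) x).scomp t (hasDerivAt_neg t)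

lemma neg_apply (h : IsC1Flow F φ) (t : ℝ) (x : E) : φ (-t) (φ t x) = x := by
  rw [← h.add, neg_add_cancel, h.zero]

lemma apply_neg (h : IsC1Flow F φ) (t : ℝ) (x : E) : φ t (φ (-t) x) = x := by
  rw [← h.add, add_neg_cancel, h.zero]

lemma image_eq (h : IsC1Flow F φ) (t : ℝ) (S : Set E) : φ t '' S = φ (-t) ⁻¹' S :=
  congrFun (image_eq_preimage_of_inverse (h.neg_apply t) (h.apply_neg t)) S

lemma continuous_time (h : IsC1Flow F φ) (x : E) : Continuous fun t => φ t x :=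
  continuous_iff_continuousAt.2 fun t => (h.deriv t x).continuousAt

/-- On a neighbourhood of any point, the maps `φ t` with `t ∈ [0, T]` share a Lipschitz constant
and take values in a common ball. Grönwall's inequality only applies while nearby orbits stay in a
ball where `F` is Lipschitz; a continuity argument in time shows that they do. -/
lemma lipschitz_forward [FiniteDimensional ℝ E] (h : IsC1Flow F φ) (T : ℝ) (x₀ : E) :
    ∃ U ∈ 𝓝 x₀, ∃ R : ℝ, ∃ C : ℝ≥0, ∀ t ∈ Icc 0 T,
      LipschitzOnWith C (φ t) U ∧ MapsTo (φ t) U (closedBall 0 R) := by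
  have : ProperSpace E := FiniteDimensional.proper ℝ E
  obtain ⟨r, hr⟩ := (((isCompact_Icc (a := (0 : ℝ)) (b := T)).image
    (h.continuous_time x₀)).isBounded).subset_closedBall 0
  obtain ⟨K, hK⟩ := (h.contDiff.locallyLipschitz.locallyLipschitzOn
    (s := closedBall 0 (r + 1))).exists_lipschitzOnWith_of_compact (isCompact_closedBall _ _)
  have hin : ∀ t ∈ Icc 0 T, ∀ z, dist z (φ t x₀) ≤ 1 → z ∈ closedBall (0 : E) (r + 1) := by
    intro t ht z hz
    have h1 := hr (mem_image_of_mem _ ht)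
    rw [mem_closedBall] at h1 ⊢
    linarith [dist_triangle z (φ t x₀) 0]
  have hgron : ∀ a b : ℝ, ∀ y z : E,
      (∀ t ∈ Ico a b, φ t y ∈ closedBall (0 : E) (r + 1)) →
      (∀ t ∈ Ico a b, φ t z ∈ closedBall (0 : E) (r + 1)) →
      ∀ t ∈ Icc a b, dist (φ t y) (φ t z) ≤
        dist (φ a y) (φ a z) * Real.exp (K * (t - a)) := by
    intro a b y z hy hz
    exact dist_le_of_trajectories_ODE_of_mem (v := fun _ => F)
      (s := fun _ => closedBall (0 : E) (r + 1)) (fun _ _ => hK)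
      (h.continuous_time y).continuousOn (fun t _ => (h.deriv t y).hasDerivWithinAt) hy
      (h.continuous_time z).continuousOn (fun t _ => (h.deriv t z).hasDerivWithinAt) hz le_rfl
  have hKT : ∀ t ≤ T, Real.exp (K * t) ≤ Real.exp (K * T) := fun t ht => by gcongr
  have hstay : ∀ y ∈ ball x₀ (Real.exp (-(K * T))), ∀ t ∈ Icc 0 T,
      dist (φ t y) (φ t x₀) < 1 := by
    intro y hy
    have hlt : ∀ t ≤ T, dist y x₀ * Real.exp (K * t) < 1 := by
      intro t ht
      calc dist y x₀ * Real.exp (K * t) ≤ dist y x₀ * Real.exp (K * T) := by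
            gcongr
        _ < Real.exp (-(K * T)) * Real.exp (K * T) := by
            gcongr
            exact hy
        _ = 1 := by rw [← Real.exp_add]; simp
    -- Continuous induction: while the Grönwall bound holds, the distance is below `1`, hence it
    -- stays below `1` for a little longer and Grönwall applies again.
    have hsub : Icc 0 T ⊆ {t | dist (φ t y) (φ t x₀) ≤ dist y x₀ * Real.exp (K * t)} := by
      apply IsClosed.Icc_subset_of_forall_exists_gt
      · refine IsClosed.inter (isClosed_le ?_ (by fun_prop)) isClosed_Icc
        exact (h.continuous_time y).dist (h.continuous_time x₀)
      · simp [h.zero]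
      · rintro t ⟨ht, ht0, htT⟩ u hu
        have h1 : dist (φ t y) (φ t x₀) < 1 := lt_of_le_of_lt ht (hlt t htT.le)
        have h2 : ∀ᶠ τ in 𝓝 t, dist (φ τ y) (φ τ x₀) < 1 :=
          (((h.continuous_time y).dist (h.continuous_time x₀)).tendsto t).eventually_lt_const h1
        obtain ⟨δ, hδ, h3⟩ := Metric.eventually_nhds_iff.1 h2
        set b := min (t + δ / 2) (min u T)
        have hb : t < b := lt_min (by linarith) (lt_min hu htT)
        have hb1 : b ≤ t + δ / 2 := min_le_left _ _
        have hb2 : b ≤ u := (min_le_right _ _).trans (min_le_left _ _)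
        have hb3 : b ≤ T := (min_le_right _ _).trans (min_le_right _ _)
        refine ⟨b, ?_, hb, hb2⟩
        have h4 := hgron t b y x₀
          (fun τ hτ => hin τ ⟨ht0.trans hτ.1, hτ.2.le.trans hb3⟩ _ (h3 (by
            rw [Real.dist_eq, abs_of_nonneg (by linarith [hτ.1])]; linarith [hτ.2])).le)
          (fun τ hτ => hin τ ⟨ht0.trans hτ.1, hτ.2.le.trans hb3⟩ _ (by simp)) b ⟨hb.le, le_rfl⟩
        refine h4.trans ?_
        calc _ ≤ dist y x₀ * Real.exp (K * t) * Real.exp (K * (b - t)) := by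
              gcongr
              exact ht
          _ = dist y x₀ * Real.exp (K * b) := by
              rw [mul_assoc, ← Real.exp_add]; ring_nf
    intro t ht
    exact lt_of_le_of_lt (hsub ht) (hlt t ht.2)
  refine ⟨_, ball_mem_nhds x₀ (Real.exp_pos (-(K * T))), r + 1, ⟨_, (Real.exp_pos (K * T)).le⟩,
    fun t ht => ⟨LipschitzOnWith.of_dist_le_mul fun y hy z hz => ?_,
      fun y hy => hin t ht _ (hstay y hy t ht).le⟩⟩
  have h1 := hgron 0 T y z (fun τ hτ => hin τ ⟨hτ.1, hτ.2.le⟩ _ (hstay y hy τ ⟨hτ.1, hτ.2.le⟩).le)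
    (fun τ hτ => hin τ ⟨hτ.1, hτ.2.le⟩ _ (hstay z hz τ ⟨hτ.1, hτ.2.le⟩).le) t ht
  rw [h.zero, h.zero, sub_zero] at h1
  calc _ ≤ _ := h1
    _ ≤ dist y z * Real.exp (K * T) := by gcongr; exact ht.2
    _ = _ := mul_comm _ _

lemma lipschitz_local [FiniteDimensional ℝ E] (h : IsC1Flow F φ) (T : ℝ) (x₀ : E) :
    ∃ U ∈ 𝓝 x₀, ∃ R : ℝ, ∃ C : ℝ≥0, ∀ t ∈ Icc (-T) T,
      LipschitzOnWith C (φ t) U ∧ MapsTo (φ t) U (closedBall 0 R) := by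
  rcases lt_or_ge T 0 with hT | hT
  · exact ⟨univ, univ_mem, 0, 0, fun t ht => by linarith [ht.1, ht.2]⟩
  obtain ⟨U, hU, R, C, hC⟩ := h.lipschitz_forward T x₀
  obtain ⟨V, hV, S, D, hD⟩ := h.reverse.lipschitz_forward T x₀
  refine ⟨U ∩ V, inter_mem hU hV, max R S, max C D, fun t ht => ?_⟩
  rcases le_total 0 t with h0 | h0
  · have := hC t ⟨h0, ht.2⟩
    exact ⟨(this.1.mono inter_subset_left).weaken (le_max_left _ _),
      fun x hx => closedBall_subset_closedBall (le_max_left _ _) (this.2 hx.1)⟩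
  · have := hD (-t) ⟨by linarith, by linarith [ht.1]⟩
    simp only [neg_neg] at this
    exact ⟨(this.1.mono inter_subset_right).weaken (le_max_right _ _),
      fun x hx => closedBall_subset_closedBall (le_max_right _ _) (this.2 hx.2)⟩

lemma continuous_uncurry [FiniteDimensional ℝ E] (h : IsC1Flow F φ) :
    Continuous (Function.uncurry φ) := by
  rw [continuous_iff_continuousAt]
  rintro ⟨t, x⟩
  obtain ⟨U, hU, R, C, hC⟩ := h.lipschitz_local (|t| + 1) x
  have h1 : ContinuousOn (Function.uncurry φ) (Icc (-(|t| + 1)) (|t| + 1) ×ˢ U) :=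
    continuousOn_prod_of_continuousOn_lipschitzOnWith' _ C
      (fun s hs => (hC s hs).1) (fun y _ => (h.continuous_time y).continuousOn)
  refine h1.continuousAt (prod_mem_nhds (Icc_mem_nhds ?_ ?_) hU)
  · linarith [neg_abs_le t]
  · linarith [le_abs_self t]

lemma continuous_space [FiniteDimensional ℝ E] (h : IsC1Flow F φ) (t : ℝ) : Continuous (φ t) :=
  h.continuous_uncurry.comp (Continuous.prodMk_right t)

variable [FiniteDimensional ℝ E] [MeasurableSpace E] [BorelSpace E]

/-- Rademacher's theorem for the locally Lipschitz map `φ t`. -/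
lemma ae_differentiableAt (h : IsC1Flow F φ) (μ : Measure E) [μ.IsAddHaarMeasure] (t : ℝ) :
    ∀ᵐ x ∂μ, DifferentiableAt ℝ (φ t) x := by
  rw [ae_iff]
  refine measure_null_of_locally_null _ fun x _ => ?_
  obtain ⟨U, hU, R, C, hC⟩ := h.lipschitz_local |t| x
  have h1 := (hC t ⟨neg_abs_le t, le_abs_self t⟩).1
  have h2 := (h1.mono interior_subset).ae_differentiableWithinAt_of_mem (μ := μ)
  rw [ae_iff] at h2
  refine ⟨_, inter_mem_nhdsWithin _ (interior_mem_nhds.2 hU), measure_mono_null ?_ h2⟩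
  rintro y ⟨hy, hyU⟩ hy'
  exact hy ((hy' hyU).differentiableAt (isOpen_interior.mem_nhds hyU))

/-- Fubini exchanges the almost every point and the (almost) every time. -/
lemma ae_ae_differentiableAt (h : IsC1Flow F φ) (μ : Measure E) [μ.IsAddHaarMeasure] :
    ∀ᵐ x ∂μ, ∀ᵐ t : ℝ, DifferentiableAt ℝ (φ t) x := by
  have := (Measure.ae_ae_comm (μ := (volume : Measure ℝ)) (ν := μ)
    (p := fun t x => DifferentiableAt ℝ (φ t) x)
    (measurableSet_of_differentiableAt_with_param ℝ h.continuous_uncurry)).1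
    (Eventually.of_forall fun t => h.ae_differentiableAt μ t)
  exact this

/-- If `φ t` is differentiable at `x` for almost every `t`, then it is so for every `t`, and the
derivative solves the variational equation `M' = DF (φ t x) ∘ M`. -/
lemma variational (h : IsC1Flow F φ) {x : E} (hx : ∀ᵐ t : ℝ, DifferentiableAt ℝ (φ t) x) (t : ℝ) :
    DifferentiableAt ℝ (φ t) x ∧
      HasDerivAt (fun s => fderiv ℝ (φ s) x)
        ((fderiv ℝ F (φ t x)).comp (fderiv ℝ (φ t) x)) t := by
  set G : ℝ → E →L[ℝ] E := fun s => fderiv ℝ (fun y => F (φ s y)) x with hG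
  have hcont : Continuous (Function.uncurry fun s y => F (φ s y)) :=
    h.contDiff.continuous.comp h.continuous_uncurry
  have hGm : Measurable G :=
    (measurable_fderiv_with_param ℝ hcont).comp (measurable_id.prodMk measurable_const)
  have hFd : Differentiable ℝ F := h.contDiff.differentiable (by norm_num)
  have hφint : ∀ t y, φ t y = y + ∫ s in (0 : ℝ)..t, F (φ s y) := by
    intro t y
    rw [intervalIntegral.integral_eq_sub_of_hasDerivAt (fun s _ => h.deriv s y)
      ((h.contDiff.continuous.comp (h.continuous_time y)).intervalIntegrable _ _), h.zero]
    abel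
  have key : ∀ t, IntervalIntegrable G volume 0 t ∧
      HasFDerivAt (fun y => ∫ s in (0 : ℝ)..t, F (φ s y)) (∫ s in (0 : ℝ)..t, G s) x := by
    intro t
    obtain ⟨U, hU, R, C, hC⟩ := h.lipschitz_local |t| x
    have : ProperSpace E := FiniteDimensional.proper ℝ E
    obtain ⟨K, hK⟩ := (h.contDiff.locallyLipschitz.locallyLipschitzOn
      (s := closedBall 0 R)).exists_lipschitzOnWith_of_compact (isCompact_closedBall _ _)
    refine intervalIntegral.hasFDerivAt_integral_of_dominated_loc_of_lip (𝕜 := ℝ)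
      (bound := fun _ => ((K * C : ℝ≥0) : ℝ)) hU ?_ ?_ hGm.aestronglyMeasurable ?_ ?_ ?_
    · exact Eventually.of_forall fun y =>
        (h.contDiff.continuous.comp (h.continuous_time y)).aestronglyMeasurable
    · exact (h.contDiff.continuous.comp (h.continuous_time x)).intervalIntegrable _ _
    · refine Eventually.of_forall fun s hs => ?_
      have hs' : s ∈ Icc (-|t|) |t| := by
        rcases mem_uIoc.1 hs with hs | hs
        · exact ⟨by linarith [abs_nonneg t, hs.1], hs.2.trans (le_abs_self t)⟩
        · exact ⟨by linarith [neg_abs_le t, hs.1], hs.2.trans (abs_nonneg t)⟩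
      rw [Real.nnabs_coe]
      exact hK.comp (hC s hs').1 (hC s hs').2
    · simp
    · filter_upwards [hx] with s hs _
      exact ((hFd _).comp x hs).hasFDerivAt
  have hφd : ∀ t, HasFDerivAt (φ t) (ContinuousLinearMap.id ℝ E + ∫ s in (0 : ℝ)..t, G s) x := by
    intro t
    have := (hasFDerivAt_id (𝕜 := ℝ) x).add (key t).2
    exact this.congr_of_eventuallyEq (Eventually.of_forall fun y => hφint t y)
  have hGeq : G = fun s => (fderiv ℝ F (φ s x)).comp (fderiv ℝ (φ s) x) := by
    funext s
    exact fderiv_comp x (hFd _) (hφd s).differentiableAt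
  have hM : (fun s => fderiv ℝ (φ s) x) =
      fun t => ContinuousLinearMap.id ℝ E + ∫ s in (0 : ℝ)..t, G s :=
    funext fun s => (hφd s).fderiv
  have hMc : Continuous fun s => fderiv ℝ (φ s) x := by
    rw [hM]
    refine continuous_const.add (intervalIntegral.continuous_primitive (fun a b => ?_) 0)
    exact (key a).1.symm.trans (key b).1
  have hGc : Continuous G := by
    rw [hGeq]
    exact ((h.contDiff.continuous_fderiv (by norm_num)).comp (h.continuous_time x)).clm_comp hMc
  refine ⟨(hφd t).differentiableAt, ?_⟩
  have h2 := (hGc.integral_hasStrictDerivAt 0 t).hasDerivAt.const_add (ContinuousLinearMap.id ℝ E)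
  rw [← congrFun hGeq t, hM]
  exact h2

end IsC1Flow

/-! ### Divergence and Jacobian determinants -/

/-- **Liouville's formula**: if `M' = B ∘ M` at time `t`, then `(det M)' = tr B * det M` there. -/
lemma hasDerivAt_det {M : ℝ → E →L[ℝ] E} {B : E →L[ℝ] E} {t : ℝ} [FiniteDimensional ℝ E]
    (hM : HasDerivAt M (B.comp (M t)) t) :
    HasDerivAt (fun s => (M s).det) (LinearMap.trace ℝ E B.toLinearMap * (M t).det) t := by
  let b := Module.finBasis ℝ E
  have hdiff : Differentiable ℝ (fun L : E →L[ℝ] E => L.det) := by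
    have : (fun L : E →L[ℝ] E => L.det) =
        fun L => ∑ σ : Equiv.Perm (Fin (Module.finrank ℝ E)), ((Equiv.Perm.sign σ : ℤ) : ℝ) *
          ∏ i, b.repr (L (b i)) (σ i) := by
      funext L
      rw [ContinuousLinearMap.det, ← LinearMap.det_toMatrix b, Matrix.det_apply']
      simp [LinearMap.toMatrix_apply]
    rw [this]
    have hc : ∀ i j, Differentiable ℝ fun L : E →L[ℝ] E => b.repr (L (b i)) j := fun i j =>
      ((LinearMap.toContinuousLinearMap (b.coord j)).comp
        (ContinuousLinearMap.apply ℝ E (b i))).differentiable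
    fun_prop
  -- The derivative of `det` at `M` in the direction `B ∘ M` is computed along the line
  -- `r ↦ M + r • (B ∘ M)`, where `det = det (1 + r • B) * det M`; `M` need not be invertible.
  have hd := (hdiff (M t)).hasFDerivAt
  have h1 := hd.comp_hasDerivAt t hM
  suffices e : LinearMap.trace ℝ E B.toLinearMap * (M t).det =
      fderiv ℝ (fun L : E →L[ℝ] E => L.det) (M t) (B.comp (M t)) by
    rw [e]
    exact h1
  have h2 : HasDerivAt (fun r : ℝ => M t + r • B.comp (M t)) (B.comp (M t)) 0 := by
    simpa using ((hasDerivAt_id (0 : ℝ)).smul_const (B.comp (M t))).const_add (M t)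
  have h3 : HasDerivAt (fun r : ℝ => (M t + r • B.comp (M t)).det)
      (fderiv ℝ (fun L : E →L[ℝ] E => L.det) (M t) (B.comp (M t))) 0 := by
    have := (hdiff (M t + (0 : ℝ) • B.comp (M t))).hasFDerivAt.comp_hasDerivAt (0 : ℝ) h2
    rw [zero_smul, add_zero] at this
    exact this
  refine HasDerivAt.unique (f := fun r : ℝ => (M t + r • B.comp (M t)).det) ?_ h3
  set A := LinearMap.toMatrix b b B.toLinearMap
  have h4 : (fun r : ℝ => (M t + r • B.comp (M t)).det) =
      fun r => (1 + A.trace * r + (Matrix.det (1 + (Polynomial.X : Polynomial ℝ) •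
        A.map Polynomial.C)).divX.divX.eval r * r ^ 2) * (M t).det := by
    funext r
    rw [← Matrix.det_one_add_smul]
    have : (M t + r • B.comp (M t)) = (1 + r • B).comp (M t) := by
      ext v; simp
    rw [this]
    simp only [ContinuousLinearMap.det, ContinuousLinearMap.toLinearMap_comp, LinearMap.det_comp]
    congr 1
    rw [← LinearMap.det_toMatrix b]
    congr 1
    simp [A, map_add, map_smul]
  rw [h4]
  have h5 : LinearMap.trace ℝ E B.toLinearMap = A.trace := LinearMap.trace_eq_matrix_trace ℝ b _
  rw [h5]
  refine HasDerivAt.mul_const ?_ _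
  set p := (Matrix.det (1 + (Polynomial.X : Polynomial ℝ) •
        A.map Polynomial.C)).divX.divX
  have := (((hasDerivAt_id (0 : ℝ)).const_mul A.trace).const_add 1).add
    ((p.hasDerivAt 0).mul ((hasDerivAt_id (0 : ℝ)).pow 2))
  exact this.congr_deriv (by simp)

lemma trace_fderiv_smul {F : E → E} {ρ : E → ℝ} {x : E} [FiniteDimensional ℝ E]
    (hF : DifferentiableAt ℝ F x) (hρ : DifferentiableAt ℝ ρ x) :
    LinearMap.trace ℝ E (fderiv ℝ (fun y => ρ y • F y) x).toLinearMap =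
      ρ x * LinearMap.trace ℝ E (fderiv ℝ F x).toLinearMap + fderiv ℝ ρ x (F x) := by
  rw [fderiv_fun_smul hρ hF]
  have : (ρ x • fderiv ℝ F x + (fderiv ℝ ρ x).smulRight (F x)).toLinearMap =
      ρ x • (fderiv ℝ F x).toLinearMap + (fderiv ℝ ρ x).toLinearMap.smulRight (F x) := by
    ext v; simp
  rw [this, map_add, map_smul, LinearMap.trace_smulRight]
  simp

namespace IsC1Flow

variable {F : E → E} {φ : ℝ → E → E} [FiniteDimensional ℝ E] [MeasurableSpace E] [BorelSpace E]

/-- If the divergence of `ρ • F` is nonnegative on the invariant set `U` and positive at `x ∈ U`,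
then `ρ`, corrected by the Jacobian, strictly increases along the forward orbit of `x`. -/
lemma density_lt (h : IsC1Flow F φ) {U : Set E} (hU : IsOpen U)
    (hinv : ∀ t, ∀ x ∈ U, φ t x ∈ U) {ρ : E → ℝ} (hρ : ContDiffOn ℝ 1 ρ U)
    (hdiv : ∀ x ∈ U, 0 ≤ LinearMap.trace ℝ E (fderiv ℝ (fun y => ρ y • F y) x).toLinearMap)
    {x : E} (hxU : x ∈ U) (hx : ∀ᵐ t : ℝ, DifferentiableAt ℝ (φ t) x)
    (hpos : 0 < LinearMap.trace ℝ E (fderiv ℝ (fun y => ρ y • F y) x).toLinearMap)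
    {t : ℝ} (ht : 0 < t) : ρ x < (fderiv ℝ (φ t) x).det * ρ (φ t x) := by
  set J : ℝ → ℝ := fun s => (fderiv ℝ (φ s) x).det with hJ
  set a : ℝ → ℝ := fun s => LinearMap.trace ℝ E (fderiv ℝ F (φ s x)).toLinearMap with ha
  set D : E → ℝ := fun y => LinearMap.trace ℝ E (fderiv ℝ (fun y => ρ y • F y) y).toLinearMap
  have hJd : ∀ s, HasDerivAt J (a s * J s) s := fun s => hasDerivAt_det (h.variational hx s).2
  have hJ0 : J 0 = 1 := by
    have : φ 0 = id := funext h.zero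
    simp [hJ, this, ContinuousLinearMap.det]
  have htr : Continuous fun L : E →L[ℝ] E => LinearMap.trace ℝ E L.toLinearMap :=
    ((LinearMap.trace ℝ E).comp (ContinuousLinearMap.coeLM ℝ)).continuous_of_finiteDimensional
  have hac : Continuous a :=
    htr.comp ((h.contDiff.continuous_fderiv (by norm_num)).comp (h.continuous_time x))
  have hJexp : ∀ s, J s = Real.exp (∫ r in (0 : ℝ)..s, a r) := by
    have hc : ∀ s, HasDerivAt (fun s => J s * Real.exp (-∫ r in (0 : ℝ)..s, a r)) 0 s := by
      intro s
      have h1 : HasDerivAt (fun s => Real.exp (-∫ r in (0 : ℝ)..s, a r))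
          (Real.exp (-∫ r in (0 : ℝ)..s, a r) * -a s) s :=
        ((hac.integral_hasStrictDerivAt 0 s).hasDerivAt.neg).exp
      exact ((hJd s).mul h1).congr_deriv (by ring)
    intro s
    have h2 := is_const_of_deriv_eq_zero (fun s => (hc s).differentiableAt)
      (fun s => (hc s).deriv) s 0
    simp only [intervalIntegral.integral_same, neg_zero, Real.exp_zero, mul_one, hJ0,
      Real.exp_neg] at h2
    field_simp at h2
    exact h2
  have hJpos : ∀ s, 0 < J s := fun s => by rw [hJexp]; exact Real.exp_pos _
  have hd : ∀ s, HasDerivAt (fun s => J s * ρ (φ s x)) (D (φ s x) * J s) s := by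
    intro s
    have hρd : DifferentiableAt ℝ ρ (φ s x) :=
      (hρ.differentiableOn (by norm_num)).differentiableAt (hU.mem_nhds (hinv s x hxU))
    have h1 := (hJd s).mul (hρd.hasFDerivAt.comp_hasDerivAt s (h.deriv s x))
    have h2 : D (φ s x) * J s =
        a s * J s * ρ (φ s x) + J s * fderiv ℝ ρ (φ s x) (F (φ s x)) := by
      simp only [D]
      rw [trace_fderiv_smul (h.contDiff.differentiable (by norm_num) _) hρd]
      simp only [ha]
      ring
    rw [h2]
    exact h1
  have hmono : Monotone (fun s => J s * ρ (φ s x)) :=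
    monotone_of_deriv_nonneg (fun s => (hd s).differentiableAt) fun s => by
      rw [(hd s).deriv]
      exact mul_nonneg (hdiv _ (hinv s x hxU)) (hJpos s).le
  -- If the monotone function `J s * ρ (φ s x)` did not exceed its initial value at time `t`, then
  -- `0` would be a local maximum, contradicting its positive derivative there.
  by_contra! hle
  have hmax : IsLocalMax (fun s => J s * ρ (φ s x)) 0 := by
    filter_upwards [Iio_mem_nhds ht] with s hs
    calc J s * ρ (φ s x) ≤ J t * ρ (φ t x) := hmono (le_of_lt hs)
      _ ≤ ρ x := hle
      _ = J 0 * ρ (φ 0 x) := by rw [hJ0, h.zero, one_mul]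
  have h0 := hmax.hasDerivAt_eq_zero (hd 0)
  rw [hJ0, h.zero, mul_one] at h0
  exact hpos.ne' h0

/-! ### Expansion of the weighted measure and recurrence -/

/-- If `ρ x < det (Dφ_t x) * ρ (φ t x)` for almost every `x ∈ U`, then `φ t` expands the measure
with density `ρ` on subsets of `U`, strictly on sets of positive volume and finite
mass. The bound is on the image of the points where `φ t` is differentiable, so that the image of
the remaining null set plays no role. -/
lemma measure_image (h : IsC1Flow F φ) (μ : Measure E) [μ.IsAddHaarMeasure]
    {U : Set E} (hinv : ∀ t, ∀ x ∈ U, φ t x ∈ U)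
    {ρ : E → ℝ} (hρ : ContinuousOn ρ U) (hρ0 : ∀ x ∈ U, 0 ≤ ρ x)
    {t : ℝ} (hexp : ∀ᵐ x ∂μ, x ∈ U → DifferentiableAt ℝ (φ t) x ∧
      ρ x < (fderiv ℝ (φ t) x).det * ρ (φ t x))
    {S : Set E} (hS : MeasurableSet S) (hSU : S ⊆ U) :
    μ.withDensity (fun x => ENNReal.ofReal (ρ x)) S ≤
      μ.withDensity (fun x => ENNReal.ofReal (ρ x)) (φ t '' S) ∧
    (μ.withDensity (fun x => ENNReal.ofReal (ρ x)) S ≠ ⊤ → μ S ≠ 0 →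
      μ.withDensity (fun x => ENNReal.ofReal (ρ x)) S <
        μ.withDensity (fun x => ENNReal.ofReal (ρ x)) (φ t '' S)) := by
  set ν := μ.withDensity (fun x => ENNReal.ofReal (ρ x)) with hν
  obtain ⟨G, hG, hGm, hGp⟩ := hexp.exists_measurable_mem
  have hSG : (S ∩ G : Set E) =ᵐ[μ] S := by
    filter_upwards [hG] with x hx
    exact propext ⟨fun hy => hy.1, fun hy => ⟨hy, hx⟩⟩
  have hm := hS.inter hGm
  have h1 : ν S = ∫⁻ x in S ∩ G, ENNReal.ofReal (ρ x) ∂μ := by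
    rw [hν, withDensity_apply _ hS, setLIntegral_congr hSG]
  have hlt : ∀ x ∈ S ∩ G, ENNReal.ofReal (ρ x) <
      ENNReal.ofReal |(fderiv ℝ (φ t) x).det| * ENNReal.ofReal (ρ (φ t x)) := by
    intro x hx
    have hxU := hSU hx.1
    have h2 := (hGp x hx.2 hxU).2
    have h3 : (fderiv ℝ (φ t) x).det * ρ (φ t x) ≤ |(fderiv ℝ (φ t) x).det| * ρ (φ t x) :=
      mul_le_mul_of_nonneg_right (le_abs_self _) (hρ0 _ (hinv t x hxU))
    rw [← ENNReal.ofReal_mul (abs_nonneg _)]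
    exact (ENNReal.ofReal_lt_ofReal_iff_of_nonneg (hρ0 x hxU)).2 (h2.trans_le h3)
  have h2 : ν (φ t '' (S ∩ G)) = ∫⁻ x in S ∩ G,
      ENNReal.ofReal |(fderiv ℝ (φ t) x).det| * ENNReal.ofReal (ρ (φ t x)) ∂μ := by
    have him : MeasurableSet (φ t '' (S ∩ G)) := by
      rw [h.image_eq]
      exact (h.continuous_space (-t)).measurable hm
    rw [hν, withDensity_apply _ him]
    exact lintegral_image_eq_lintegral_abs_det_fderiv_mul μ hm
      (fun x hx => (hGp x hx.2 (hSU hx.1)).1.hasFDerivAt.hasFDerivWithinAt)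
      (Function.LeftInverse.injective (h.neg_apply t)).injOn _
  have h3 : ν (φ t '' (S ∩ G)) ≤ ν (φ t '' S) := measure_mono (image_mono inter_subset_left)
  refine ⟨?_, fun hfin hne => ?_⟩
  · refine le_trans ?_ h3
    rw [h1, h2]
    exact setLIntegral_mono' hm fun x hx => (hlt x hx).le
  · refine lt_of_lt_of_le ?_ h3
    rw [h1] at hfin ⊢
    rw [h2]
    refine lintegral_strict_mono ?_ ?_ hfin ((ae_restrict_iff' hm).2 (Eventually.of_forall hlt))
    · rw [Ne, Measure.restrict_eq_zero, measure_congr hSG]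
      exact hne
    · have h4 : ContinuousOn (fun x => ENNReal.ofReal (ρ (φ t x))) (S ∩ G) :=
        ENNReal.continuous_ofReal.comp_continuousOn
          (hρ.comp (h.continuous_space t).continuousOn fun x hx => hinv t x (hSU hx.1))
      have h5 : Measurable fun x => ENNReal.ofReal |(fderiv ℝ (φ t) x).det| :=
        ((ContinuousLinearMap.continuous_det.measurable.comp
          (measurable_fderiv ℝ (φ t))).abs).ennreal_ofReal
      exact h5.aemeasurable.mul (h4.aemeasurable hm)

/-- If the forward flow strictly expands `ν` on subsets of `U`, then almost no point of a set `P` of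
finite `ν`-mass returns to `P` infinitely often along the times `k * q`. -/
lemma recurrent_null (h : IsC1Flow F φ) {μ ν : Measure E} {U : Set E} {q : ℝ} (hq : 0 < q)
    (hexp : ∀ t > 0, ∀ S, MeasurableSet S → S ⊆ U → ν S ≤ ν (φ t '' S) ∧
      (ν S ≠ ⊤ → μ S ≠ 0 → ν S < ν (φ t '' S)))
    {P : Set E} (hP : MeasurableSet P) (hPU : P ⊆ U) (hfin : ν P ≠ ⊤) :
    MeasurableSet {x | x ∈ P ∧ ∃ᶠ k : ℕ in atTop, φ (k * q) x ∈ P} ∧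
    μ {x | x ∈ P ∧ ∃ᶠ k : ℕ in atTop, φ (k * q) x ∈ P} = 0 := by
  set f : ℕ → E → E := fun k => φ (k * q) with hf
  have hfadd : ∀ j k x, f (j + k) x = f j (f k x) := by
    intro j k x
    simp only [hf, Nat.cast_add, add_mul, h.add]
  have hfinj : ∀ k, Function.Injective (f k) := fun k =>
    Function.LeftInverse.injective (h.neg_apply _)
  have hfm : ∀ k, MeasurableSet {x | f k x ∈ P} := fun k =>
    (h.continuous_space _).measurable hP
  set W : Set E := {x | x ∈ P ∧ ∃ᶠ k : ℕ in atTop, f k x ∈ P} with hW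
  have hWm : MeasurableSet W := by
    have : W = P ∩ ⋂ N : ℕ, ⋃ k : ℕ, ⋃ _ : N ≤ k, {x | f k x ∈ P} := by
      ext x
      simp [hW, frequently_atTop]
    rw [this]
    exact hP.inter (MeasurableSet.iInter fun N => MeasurableSet.iUnion fun k =>
      MeasurableSet.iUnion fun _ => hfm k)
  refine ⟨hWm, ?_⟩
  -- `V k` consists of the points of `W` whose first return to `P` happens at step `k + 1`.
  set V : ℕ → Set E := fun k => {x | x ∈ W ∧ f (k + 1) x ∈ P ∧ ∀ j < k, f (j + 1) x ∉ P} with hV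
  have hVm : ∀ k, MeasurableSet (V k) := by
    intro k
    have : V k = W ∩ ({x | f (k + 1) x ∈ P} ∩ ⋂ j : ℕ, ⋂ _ : j < k, {x | f (j + 1) x ∈ P}ᶜ) := by
      ext x
      simp only [hV, mem_ofPred_eq, mem_inter_iff, mem_iInter, mem_compl_iff]
    rw [this]
    exact hWm.inter ((hfm _).inter (MeasurableSet.iInter fun j => MeasurableSet.iInter fun _ =>
      (hfm _).compl))
  have hVW : ∀ k, V k ⊆ W := fun k x hx => hx.1
  have hWU : W ⊆ U := fun x hx => hPU hx.1
  have hcover : W ⊆ ⋃ k, V k := by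
    intro x hx
    have hex : ∃ k, f (k + 1) x ∈ P := by
      obtain ⟨k, hk, hkP⟩ := frequently_atTop.1 hx.2 1
      exact ⟨k - 1, by rwa [Nat.sub_add_cancel hk]⟩
    classical
    exact mem_iUnion.2 ⟨Nat.find hex, hx, Nat.find_spec hex, fun j hj => Nat.find_min hex hj⟩
  have hsub : ∀ k, f (k + 1) '' V k ⊆ W := by
    rintro k _ ⟨x, hx, rfl⟩
    refine ⟨hx.2.1, frequently_atTop.2 fun N => ?_⟩
    obtain ⟨m, hm, hmP⟩ := frequently_atTop.1 hx.1.2 (N + (k + 1))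
    refine ⟨m - (k + 1), by omega, ?_⟩
    rw [← hfadd, Nat.sub_add_cancel (by omega)]
    exact hmP
  have hdisj : Pairwise (Function.onFun Disjoint fun k => f (k + 1) '' V k) := by
    rw [pairwise_disjoint_on]
    intro i j hij
    rw [Set.disjoint_left]
    rintro _ ⟨x, hx, rfl⟩ ⟨y, hy, hxy⟩
    have h1 : f (i + 1) (f (j - i) y) = f (i + 1) x := by
      rw [← hfadd, ← hxy]
      congr 1
      omega
    have h2 := hfinj _ h1
    refine hy.2.2 (j - i - 1) (by omega) ?_
    rw [Nat.sub_add_cancel (by omega), h2]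
    exact hx.1.1
  have hWfin : ν W ≠ ⊤ := ne_top_of_le_ne_top hfin (measure_mono fun x hx => hx.1)
  have himage : ∑' k, ν (f (k + 1) '' V k) ≤ ν W := by
    rw [← measure_iUnion hdisj fun k => ?_]
    · exact measure_mono (iUnion_subset hsub)
    · simp only [hf]
      rw [h.image_eq]
      exact (h.continuous_space _).measurable (hVm k)
  have hpos : ∀ k : ℕ, 0 < ((k + 1 : ℕ) : ℝ) * q := fun k => by positivity
  have hle : ∀ k, ν (V k) ≤ ν (f (k + 1) '' V k) := fun k =>
    (hexp _ (hpos k) _ (hVm k) ((hVW k).trans hWU)).1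
  by_contra hne
  obtain ⟨k, hk⟩ : ∃ k, μ (V k) ≠ 0 := by
    by_contra! hall
    exact hne (measure_mono_null hcover (measure_iUnion_null hall))
  have hlt : ν (V k) < ν (f (k + 1) '' V k) :=
    (hexp _ (hpos k) _ (hVm k) ((hVW k).trans hWU)).2
      (ne_top_of_le_ne_top hWfin (measure_mono (hVW k))) hk
  have hsum : ∑' k, ν (V k) ≠ ⊤ :=
    ne_top_of_le_ne_top hWfin ((ENNReal.tsum_le_tsum hle).trans himage)
  exact absurd (calc ν W ≤ ν (⋃ k, V k) := measure_mono hcover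
    _ ≤ ∑' k, ν (V k) := measure_iUnion_le _
    _ < ∑' k, ν (f (k + 1) '' V k) := ENNReal.tsum_lt_tsum hsum hle hlt
    _ ≤ ν W := himage) (lt_irrefl _)

end IsC1Flow

theorem ae_convergence_along_all_rational_lattices {n : ℕ}
    (F : EuclideanSpace ℝ (Fin n) → EuclideanSpace ℝ (Fin n))
    (hF : ContDiff ℝ 1 F)
    (φ : ℝ → EuclideanSpace ℝ (Fin n) → EuclideanSpace ℝ (Fin n))
    (hφ0 : ∀ x, φ 0 x = x)
    (hφadd : ∀ s t x, φ (s + t) x = φ s (φ t x))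
    (hφderiv : ∀ t x, HasDerivAt (fun τ => φ τ x) (F (φ t x)) t)
    (A : Set (EuclideanSpace ℝ (Fin n)))
    (hA : IsCompact A)
    (hAinv : ∀ t, φ t '' A = A)
    (ρ : EuclideanSpace ℝ (Fin n) → ℝ)
    (hρC1 : ContDiffOn ℝ 1 ρ Aᶜ)
    (hCLD1 : ∀ᵐ x ∂volume, x ∈ Aᶜ → 0 < ρ x)
    (hCLD2 : ∀ ε > 0, IntegrableOn ρ {x | ε ≤ infDist x A} volume)
    (hCLD3 : ∀ᵐ x ∂volume, x ∈ Aᶜ → 0 < divMul F ρ x) :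
    ∃ N : Set (EuclideanSpace ℝ (Fin n)), volume N = 0 ∧
      ∀ x ∉ N, ∀ q : ℚ, 0 < q →
        Tendsto (fun k : ℕ => infDist (φ ((k : ℝ) * (q : ℝ)) x) A) atTop (nhds 0) := by
  have h : IsC1Flow F φ := ⟨hF, hφ0, hφadd, hφderiv⟩
  have hU : IsOpen Aᶜ := hA.isClosed.isOpen_compl
  have hinv : ∀ t, ∀ x ∈ Aᶜ, φ t x ∈ Aᶜ := by
    intro t x hx hmem
    refine hx ?_
    rw [← hAinv (-t)]
    exact ⟨_, hmem, h.neg_apply t x⟩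
  have hρc : ContinuousOn ρ Aᶜ := hρC1.continuousOn
  have hρ0 := nonneg_of_ae_pos hU hρc hCLD1
  have hdivc : ContinuousOn (divMul F ρ) Aᶜ := by
    have h1 : ContDiffOn ℝ 1 (fun y => ρ y • F y) Aᶜ := hρC1.smul hF.contDiffOn
    exact ((LinearMap.trace ℝ (EuclideanSpace ℝ (Fin n))).comp
      (ContinuousLinearMap.coeLM ℝ)).continuous_of_finiteDimensional.comp_continuousOn
        (h1.continuousOn_fderiv_of_isOpen hU (by norm_num))
  have hdiv0 := nonneg_of_ae_pos hU hdivc hCLD3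
  set ν : Measure (EuclideanSpace ℝ (Fin n)) :=
    volume.withDensity (fun x => ENNReal.ofReal (ρ x)) with hν
  have hexp : ∀ t > 0, ∀ S, MeasurableSet S → S ⊆ Aᶜ → ν S ≤ ν (φ t '' S) ∧
      (ν S ≠ ⊤ → volume S ≠ 0 → ν S < ν (φ t '' S)) := by
    intro t ht S hS hSU
    refine h.measure_image volume hinv hρc hρ0 ?_ hS hSU
    filter_upwards [h.ae_ae_differentiableAt volume, hCLD3] with x hx hxd hxU
    exact ⟨(h.variational hx t).1, h.density_lt hU hinv hρC1 hdiv0 hxU hx (hxd hxU) ht⟩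
  have hnull : ∀ t ≥ 0, ∀ S, MeasurableSet S → S ⊆ Aᶜ → volume S = 0 →
      volume (φ t ⁻¹' S) = 0 := by
    intro t ht S hS hSU hS0
    rcases ht.eq_or_lt with rfl | ht
    · rwa [show φ 0 = id from funext hφ0, preimage_id]
    have hm : MeasurableSet (φ t ⁻¹' S) := (h.continuous_space t).measurable hS
    have hsub : φ t ⁻¹' S ⊆ Aᶜ := by
      intro x hx
      have := hinv (-t) _ (hSU hx)
      rwa [h.neg_apply] at this
    have h1 : ν (φ t ⁻¹' S) = 0 := by
      refine le_antisymm ((hexp t ht _ hm hsub).1.trans ?_) bot_le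
      exact (measure_mono (image_preimage_subset _ _)).trans
        (withDensity_absolutelyContinuous _ _ hS0).le
    rw [hν, withDensity_apply _ hm, lintegral_eq_zero_iff' ?_, EventuallyEq,
      ae_restrict_iff' hm] at h1
    · have h2 : ∀ᵐ x, x ∉ φ t ⁻¹' S := by
        filter_upwards [h1, hCLD1] with x hx hx' hmem
        have h3 := hx hmem
        simp only [Pi.zero_apply, ENNReal.ofReal_eq_zero] at h3
        exact h3.not_gt (hx' (hsub hmem))
      exact measure_eq_zero_iff_ae_notMem.2 h2
    · exact ((hρc.mono hsub).aemeasurable hm).ennreal_ofReal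
  set P : ℕ → Set (EuclideanSpace ℝ (Fin n)) := fun m => {x | 1 / ((m : ℝ) + 1) ≤ infDist x A}
  have hPm : ∀ m, MeasurableSet (P m) := fun m =>
    (isClosed_le continuous_const (continuous_infDist_pt A)).measurableSet
  have hPU : ∀ m, P m ⊆ Aᶜ := by
    intro m x hx hxA
    have h1 : 1 / ((m : ℝ) + 1) ≤ infDist x A := hx
    rw [infDist_zero_of_mem hxA] at h1
    exact absurd h1 (not_le.2 (by positivity))
  have hPfin : ∀ m, ν (P m) ≠ ⊤ := by
    intro m
    rw [hν, withDensity_apply _ (hPm m)]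
    exact (hCLD2 (1 / ((m : ℝ) + 1)) (by positivity)).lintegral_lt_top.ne
  set W : ℚ → ℕ → Set (EuclideanSpace ℝ (Fin n)) := fun q m =>
    {x | x ∈ P m ∧ ∃ᶠ k : ℕ in atTop, φ (k * (q : ℝ)) x ∈ P m} with hW
  have hWnull : ∀ q : ℚ, 0 < q → ∀ m, MeasurableSet (W q m) ∧ volume (W q m) = 0 :=
    fun q hq m => h.recurrent_null (by exact_mod_cast hq) hexp (hPm m) (hPU m) (hPfin m)
  refine ⟨⋃ q : {q : ℚ // 0 < q}, ⋃ m : ℕ, ⋃ k : ℕ, φ (k * ((q : ℚ) : ℝ)) ⁻¹' W q m, ?_, ?_⟩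
  · refine measure_iUnion_null fun q => measure_iUnion_null fun m => measure_iUnion_null fun k => ?_
    have hq : (0 : ℝ) < ((q : ℚ) : ℝ) := by exact_mod_cast q.2
    exact hnull _ (by positivity) _ (hWnull q q.2 m).1 (fun x hx => hPU m hx.1) (hWnull q q.2 m).2
  · intro x hx q hq
    simp only [mem_iUnion, not_exists] at hx
    rw [Metric.tendsto_nhds]
    intro ε hε
    obtain ⟨m, hm⟩ := exists_nat_one_div_lt hε
    have hnot : ¬ ∃ᶠ k : ℕ in atTop, φ (k * (q : ℝ)) x ∈ P m := by
      intro hfr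
      obtain ⟨k, hk⟩ := hfr.exists
      refine hx ⟨q, hq⟩ m k ⟨hk, frequently_atTop.2 fun N => ?_⟩
      obtain ⟨j, hj, hjP⟩ := frequently_atTop.1 hfr (N + k)
      refine ⟨j - k, by omega, ?_⟩
      rw [← hφadd, ← add_mul, ← Nat.cast_add, Nat.sub_add_cancel (by omega)]
      exact hjP
    filter_upwards [not_frequently.1 hnot] with k hk
    rw [Real.dist_eq, sub_zero, abs_of_nonneg infDist_nonneg]
    exact (not_le.1 hk).trans hm
end
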